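/- arXiv:2409.00380 — 6 statements merged into one kernel-verified Lean document; each statement's English description precedes it below -/
import Mathlib

section
/- Let m ≥ 2 and n ≥ 1 with n + 1 not divisible by m, let ζ be a primitive nm-th root of unity, and let g ∈ G(m,m,n+1) ⊂ GL_{n+1}(C) be the monomial matrix whose upper-left (n × n)-block is the companion-type matrix sending e_i ↦ e_{i−1} (2 ≤ i ≤ n) and e_1 ↦ ζ^n e_n, and whose last diagonal entry is ζ^{−n}. Let E be the ζ^n-eigenspace of g^n. Then E = C e_1 ⊕ ... ⊕ C e_n, the subgroup N_E = {s ∈ G(m,m,n+1) : s(E) = E} consists exactly of those monomial matrices in G(m,m,n+1) fixing the line C e_{n+1}, and the restriction of N_E to E equals G(m,1,n) ⊂ GL_n(C); that is, the m-reflection subquotient of G(m,m,n+1) is G(m,1,n). -/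
open Matrix MvPolynomial

namespace Paper

noncomputable section

/-- The standard Hermitian inner product `(v, w) = Σ v_i conj(w_i)` on `ℂ^N`. -/
def herm {N : ℕ} (v w : Fin N → ℂ) : ℂ := ∑ i, v i * (starRingEnd ℂ) (w i)

/-- The reflection `s(v, λ) : w ↦ w - (1 - λ) ((w,v)/(v,v)) v` with root `v` and
nontrivial eigenvalue `λ`, as a matrix. -/
def reflMat {N : ℕ} (v : Fin N → ℂ) (lam : ℂ) : Matrix (Fin N) (Fin N) ℂ :=
  Matrix.of fun i j =>
    (if i = j then (1 : ℂ) else 0) - (1 - lam) * v i * (starRingEnd ℂ) (v j) / herm v v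

/-- The monomial matrix `ι(θ, σ)` with `e_i ↦ θ_{σ(i)} e_{σ(i)}`. -/
def monomialMatrix {N : ℕ} (θ : Fin N → ℂ) (σ : Equiv.Perm (Fin N)) :
    Matrix (Fin N) (Fin N) ℂ :=
  Matrix.of fun j i => if j = σ i then θ (σ i) else 0

/-- The imprimitive reflection group `G(m, p, N)`: all monomial `N × N` matrices whose
nonzero entries are `m`-th roots of unity and whose product of nonzero entries is an
`(m/p)`-th root of unity. -/
def Gimp (m p N : ℕ) : Set (Matrix (Fin N) (Fin N) ℂ) :=
  {M | ∃ (θ : Fin N → ℂ) (σ : Equiv.Perm (Fin N)),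
    (∀ i, θ i ^ m = 1) ∧ (∏ i, θ i) ^ (m / p) = 1 ∧ M = monomialMatrix θ σ}

/-- The `μ`-eigenspace of (the linear map of) a matrix. -/
def eigSpace {n : ℕ} (M : Matrix (Fin n) (Fin n) ℂ) (μ : ℂ) : Submodule ℂ (Fin n → ℂ) :=
  Module.End.eigenspace M.mulVecLin μ

lemma monomial_mulVec {N : ℕ} (θ : Fin N → ℂ) (σ : Equiv.Perm (Fin N)) (v : Fin N → ℂ) (i : Fin N) :
    (monomialMatrix θ σ).mulVec v (σ i) = θ (σ i) * v i := by
  simp [monomialMatrix, Matrix.mulVec, dotProduct]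

lemma monomial_single {N : ℕ} (θ : Fin N → ℂ) (σ : Equiv.Perm (Fin N)) (i : Fin N) :
    (monomialMatrix θ σ).mulVec (Pi.single i 1) = θ (σ i) • (Pi.single (σ i) 1 : Fin N → ℂ) := by
  ext j
  by_cases h : j = σ i <;> simp [monomialMatrix, h]

/-- the permutation underlying the regular element. -/
lemma exists_perm (n : ℕ) (hn : 1 ≤ n) : ∃ σ : Equiv.Perm (Fin (n + 1)),
    (∀ i, (σ i).1 = if i.1 = 0 then n - 1 else if i.1 = n then n else i.1 - 1) := by
  let f : Fin (n + 1) → Fin (n + 1) := fun i =>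
    ⟨if i.1 = 0 then n - 1 else if i.1 = n then n else i.1 - 1, by
      have := i.2
      split_ifs <;> omega⟩
  have hf : Function.Injective f := by
    intro a b hab
    have h : (f a).1 = (f b).1 := by rw [hab]
    have ha := a.2
    have hb := b.2
    simp only [f] at h
    ext
    split_ifs at h <;> omega
  exact ⟨Equiv.ofBijective f (Finite.injective_iff_bijective.mp hf), fun i => rfl⟩

lemma exists_restrict (n : ℕ) (σ : Equiv.Perm (Fin (n + 1))) (h : σ (Fin.last n) = Fin.last n) :
    ∃ τ : Equiv.Perm (Fin n), ∀ i, (τ i).castSucc = σ i.castSucc := by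
  have h1 : ∀ i : Fin n, ∃ j : Fin n, j.castSucc = σ i.castSucc := by
    intro i
    apply Fin.exists_castSucc_eq.mpr
    intro h2
    rw [← h] at h2
    exact (Fin.castSucc_lt_last i).ne (σ.injective h2)
  choose f hf using h1
  have hi : Function.Injective f := by
    intro a b hab
    have := hf a
    rw [hab, hf b] at this
    exact (Fin.castSucc_injective n (σ.injective this)).symm
  exact ⟨Equiv.ofBijective f (Finite.injective_iff_bijective.mp hi), hf⟩

lemma exists_extend (n : ℕ) (τ : Equiv.Perm (Fin n)) :
    ∃ σ : Equiv.Perm (Fin (n + 1)), σ (Fin.last n) = Fin.last n ∧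
      ∀ i, σ i.castSucc = (τ i).castSucc := by
  let f : Fin (n + 1) → Fin (n + 1) := Fin.snoc (α := fun _ => Fin (n + 1)) (fun i => (τ i).castSucc) (Fin.last n)
  have h1 : ∀ i : Fin n, f i.castSucc = (τ i).castSucc := fun i => by simp [f]
  have h2 : f (Fin.last n) = Fin.last n := by simp [f]
  have hi : Function.Injective f := by
    intro a b
    induction a using Fin.lastCases <;> induction b using Fin.lastCases
    · simp
    · rw [h1, h2]
      intro h
      exact absurd h.symm (Fin.castSucc_lt_last _).ne
    · rw [h1, h2]
      intro h
      exact absurd h (Fin.castSucc_lt_last _).ne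
    · rw [h1, h1]
      intro h
      rw [τ.injective (Fin.castSucc_injective n h)]
  exact ⟨Equiv.ofBijective f (Finite.injective_iff_bijective.mp hi), h2, h1⟩

lemma submatrix_monomial (n : ℕ) (θ : Fin (n + 1) → ℂ) (σ : Equiv.Perm (Fin (n + 1)))
    (τ : Equiv.Perm (Fin n)) (h : ∀ i, (τ i).castSucc = σ i.castSucc) :
    (monomialMatrix θ σ).submatrix Fin.castSucc Fin.castSucc =
      monomialMatrix (fun i => θ i.castSucc) τ := by
  ext j i
  simp [monomialMatrix, ← h]

lemma pow_mulVec (n : ℕ) (hn : 1 ≤ n) (g : Matrix (Fin (n + 1)) (Fin (n + 1)) ℂ) (a : ℂ)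
    (h0 : ∀ v, g.mulVec v ⟨n - 1, by omega⟩ = a * v 0)
    (h1 : ∀ v, g.mulVec v (Fin.last n) = a⁻¹ * v (Fin.last n))
    (h2 : ∀ v, ∀ i (hi : i + 1 < n), g.mulVec v ⟨i, by omega⟩ = v ⟨i + 1, by omega⟩)
    (v : Fin (n + 1) → ℂ) (k : ℕ) (hk : k ≤ n) :
    (g ^ k).mulVec v (Fin.last n) = (a⁻¹) ^ k * v (Fin.last n) ∧
    (∀ i (_ : i + k < n), (g ^ k).mulVec v ⟨i, by omega⟩ = v ⟨i + k, by omega⟩) ∧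
    (∀ i (_ : i < n) (_ : n ≤ i + k), (g ^ k).mulVec v ⟨i, by omega⟩ = a * v ⟨i + k - n, by omega⟩) := by
  induction k with
  | zero =>
    refine ⟨by simp, fun i hi => by simp, fun i hi hi2 => by omega⟩
  | succ k ih =>
    obtain ⟨i1, i2, i3⟩ := ih (by omega)
    rw [pow_succ', ← Matrix.mulVec_mulVec]
    refine ⟨?_, ?_, ?_⟩
    · rw [h1, i1, pow_succ']
      ring
    · intro i hi
      rw [h2 _ i (by omega), i2 (i + 1) (by omega)]
      congr 2
      omega
    · intro i hi hi2
      by_cases h : i + 1 < n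
      · rw [h2 _ i h, i3 (i + 1) h (by omega)]
        congr 3
        omega
      · obtain rfl : i = n - 1 := by omega
        rw [h0]
        have := i2 0 (by omega)
        rw [show (0 : Fin (n + 1)) = ⟨0, by omega⟩ from rfl, this]
        congr 3
        omega

/-- Let `m ≥ 2`, `n ≥ 1` with `n + 1` not divisible by `m`, `ζ` a
primitive `nm`-th root of unity, and `g ∈ G(m,m,n+1)` the monomial matrix with
`e_i ↦ e_{i-1}` (`2 ≤ i ≤ n`), `e_1 ↦ ζ^n e_n` and last diagonal entry `ζ^{-n}`
(indices `0`-based below).  Let `E` be the `ζ^n`-eigenspace of `g^n`.  Then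
`E = ℂe_1 ⊕ ... ⊕ ℂe_n` (equivalently `E = {v : v_{n+1} = 0}`), `N_E` consists exactly
of the elements of `G(m,m,n+1)` fixing the line `ℂ e_{n+1}`, and the restriction of
`N_E` to `E` (as `n × n` matrices in the coordinates `u_1, ..., u_n`) equals
`G(m,1,n)`: the `m`-reflection subquotient of `G(m,m,n+1)` is `G(m,1,n)`. -/
theorem statement_7 (m n : ℕ) (hm : 2 ≤ m) (hn : 1 ≤ n) (hnd : ¬ m ∣ (n + 1))
    (ζ : ℂ) (hζ : IsPrimitiveRoot ζ (n * m))
    (g : Matrix (Fin (n + 1)) (Fin (n + 1)) ℂ)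
    (hg : g = Matrix.of fun j i : Fin (n + 1) =>
      if i.1 = 0 then (if j.1 = n - 1 then ζ ^ n else 0)
      else if i.1 = n then (if j.1 = n then (ζ ^ n)⁻¹ else 0)
      else if j.1 + 1 = i.1 then 1 else 0)
    (E : Submodule ℂ (Fin (n + 1) → ℂ))
    (hE : E = eigSpace (g ^ n) (ζ ^ n)) :
    g ∈ Gimp m m (n + 1) ∧
    (∀ v : Fin (n + 1) → ℂ, v ∈ E ↔ v (Fin.last n) = 0) ∧
    (∀ M ∈ Gimp m m (n + 1),
      ((∀ v ∈ E, M.mulVec v ∈ E) ↔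
        ∃ c : ℂ, M.mulVec (Pi.single (Fin.last n) 1) =
          c • (Pi.single (Fin.last n) 1 : Fin (n + 1) → ℂ))) ∧
    (fun M : Matrix (Fin (n + 1)) (Fin (n + 1)) ℂ =>
        M.submatrix (Fin.castSucc) (Fin.castSucc)) ''
      {M | M ∈ Gimp m m (n + 1) ∧ ∀ v ∈ E, M.mulVec v ∈ E} = Gimp m 1 n := by
  obtain ⟨σ, hσ⟩ := exists_perm n hn
  have hζ0 : ζ ≠ 0 := hζ.ne_zero (by positivity)
  have hζm : (ζ ^ n) ^ m = 1 := by rw [← pow_mul, hζ.pow_eq_one]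
  let θ : Fin (n + 1) → ℂ := fun j => if j.1 = n - 1 then ζ ^ n else if j.1 = n then (ζ ^ n)⁻¹ else 1
  have hgm : g = monomialMatrix θ σ := by
    rw [hg]
    ext j i
    have hi := i.2
    have hj := j.2
    simp only [monomialMatrix, Matrix.of_apply, Fin.ext_iff, θ, hσ]
    split_ifs <;> first | rfl | omega
  have hv := monomial_mulVec θ σ
  rw [← hgm] at hv
  have key := pow_mulVec n hn g (ζ ^ n)
    (fun v => by
      have h := hv v 0
      rw [show σ 0 = ⟨n - 1, by omega⟩ from Fin.ext (by simp [hσ])] at h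
      rw [h]
      simp [θ])
    (fun v => by
      have h := hv v (Fin.last n)
      rw [show σ (Fin.last n) = Fin.last n from Fin.ext (by simp [hσ]; omega)] at h
      rw [h]
      have : n ≠ n - 1 := by omega
      simp [θ, this])
    (fun v i hi => by
      have h := hv v ⟨i + 1, by omega⟩
      rw [show σ ⟨i + 1, by omega⟩ = ⟨i, by omega⟩ from
        Fin.ext (by simp [hσ]; omega)] at h
      rw [h]
      have h3 : i ≠ n - 1 := by omega
      have h4 : i ≠ n := by omega
      simp [θ, h3, h4])
  have hmemE : ∀ v : Fin (n + 1) → ℂ, v ∈ E ↔ v (Fin.last n) = 0 := by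
    intro v
    obtain ⟨k1, -, k3⟩ := key v n le_rfl
    rw [hE, eigSpace, Module.End.mem_eigenspace_iff, Matrix.mulVecLin_apply]
    constructor
    · intro h
      rw [h] at k1
      by_contra hne
      simp only [Pi.smul_apply, smul_eq_mul] at k1
      have k2 := mul_right_cancel₀ hne k1
      apply hnd
      have : ζ ^ (n * (n + 1)) = 1 := by
        rw [mul_add, mul_one, pow_add, k2, pow_mul, ← mul_pow, mul_inv_cancel₀ (pow_ne_zero _ hζ0), one_pow]
      have h5 := (hζ.pow_eq_one_iff_dvd _).mp this
      exact Nat.dvd_of_mul_dvd_mul_left (by omega) h5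
    · intro h
      ext j
      induction j using Fin.lastCases with
      | last => rw [k1]; simp [h]
      | cast j =>
        have := k3 j.1 j.2 (by omega)
        simp only [Nat.add_sub_cancel] at this
        exact this
  have hstab : ∀ (θ : Fin (n + 1) → ℂ) (σ : Equiv.Perm (Fin (n + 1))), (∀ i, θ i ^ m = 1) →
      ((∀ v ∈ E, (monomialMatrix θ σ).mulVec v ∈ E) ↔ σ (Fin.last n) = Fin.last n) := by
    intro θ σ hθ
    have hne : ∀ i, θ i ≠ 0 := fun i h => by
      have := hθ i
      rw [h, zero_pow (by omega)] at this
      exact zero_ne_one this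
    simp only [hmemE]
    constructor
    · intro h
      by_contra hl
      obtain ⟨i, hi⟩ := σ.surjective (Fin.last n)
      have hil : i ≠ Fin.last n := fun h' => hl (by rw [← h', hi, h'])
      have := h (Pi.single i 1) (by simp [Pi.single_apply, hil.symm])
      rw [← hi, monomial_mulVec] at this
      simp [hne] at this
    · intro h v h0
      have := monomial_mulVec θ σ v (Fin.last n)
      rw [h] at this
      rw [this, h0, mul_zero]
  refine ⟨?_, hmemE, ?_, ?_⟩
  · refine ⟨θ, σ, ?_, ?_, hgm⟩
    · intro i
      simp only [θ]
      split_ifs <;> simp [hζm]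
    · rw [Nat.div_self (by omega), pow_one]
      obtain ⟨k, rfl⟩ : ∃ k, n = k + 1 := ⟨n - 1, by omega⟩
      rw [Fin.prod_univ_castSucc, Fin.prod_univ_castSucc, Finset.prod_eq_one]
      · simp [θ, hζ0]
      · intro i _
        have h1 : i.1 ≠ k := by omega
        have h2 : i.1 ≠ k + 1 := by omega
        simp [θ, h1, h2]
  · rintro M ⟨θ, σ, hθ, -, rfl⟩
    rw [hstab θ σ hθ, monomial_single]
    constructor
    · intro h
      exact ⟨θ (σ (Fin.last n)), by rw [h]⟩
    · rintro ⟨c, hc⟩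
      by_contra hl
      have := congrFun hc (σ (Fin.last n))
      simp [hl] at this
      have h2 := hθ (σ (Fin.last n))
      rw [this, zero_pow (by omega)] at h2
      exact zero_ne_one h2
  · ext A
    constructor
    · rintro ⟨M, ⟨⟨θ, σ, hθ, -, rfl⟩, hM⟩, rfl⟩
      obtain ⟨τ, hτ⟩ := exists_restrict n σ ((hstab θ σ hθ).mp hM)
      refine ⟨fun i => θ i.castSucc, τ, fun i => hθ _, ?_, submatrix_monomial n θ σ τ hτ⟩
      rw [Nat.div_one, ← Finset.prod_pow]
      exact Finset.prod_eq_one fun i _ => hθ _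
    · rintro ⟨θ, τ, hθ, hp, rfl⟩
      rw [Nat.div_one] at hp
      obtain ⟨σ, hl, hσ'⟩ := exists_extend n τ
      let θ' : Fin (n + 1) → ℂ := Fin.snoc (α := fun _ => ℂ) θ (∏ i, θ i)⁻¹
      have ht1 : ∀ i : Fin n, θ' i.castSucc = θ i := fun i => by simp [θ']
      have ht2 : θ' (Fin.last n) = (∏ i, θ i)⁻¹ := by simp [θ']
      have hθ' : ∀ i, θ' i ^ m = 1 := by
        intro i
        induction i using Fin.lastCases with
        | last => rw [ht2, inv_pow, hp, inv_one]
        | cast i => rw [ht1, hθ]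
      refine ⟨monomialMatrix θ' σ, ⟨⟨θ', σ, hθ', ?_, rfl⟩, (hstab θ' σ hθ').mpr hl⟩, ?_⟩
      · rw [Nat.div_self (by omega), pow_one, Fin.prod_univ_castSucc, ht2]
        simp only [ht1]
        apply mul_inv_cancel₀
        intro h
        rw [h, zero_pow (by omega)] at hp
        exact zero_ne_one hp
      · have := submatrix_monomial n θ' σ τ (fun i => (hσ' i).symm)
        simp only [ht1] at this
        exact this

end
end Paper
end

section
/- Let m ≥ 2, let k > 1 be a divisor of n, set n' = n/k, let ζ be a primitive nm-th root of unity, and let ḡ ∈ G(m,1,n) be the monomial matrix sending e_i ↦ e_{i−1} (2 ≤ i ≤ n) and e_1 ↦ ζ^n e_n. Let E be the ζ^{n'}-eigenspace of ḡ^{n'}. Then E = C ě_1 ⊕ ... ⊕ C ě_{n'}, where ě_j = (1/√k) Σ_{p=0}^{k−1} ζ^{p n'} e_{j + p n'} (1 ≤ j ≤ n'), and the reflection subquotient π_E(N_E) (where N_E = {s ∈ G(m,1,n) : s(E) = E} and π_E is restriction to E) is isomorphic, via a C-linear isomorphism E ≅ C^{n'}, to G(km, 1, n'); that is, the km-reflection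 subquotient of G(m,1,n) is isomorphic to G(km, 1, n/k). -/
open Matrix MvPolynomial

namespace Paper

noncomputable section

theorem mem_Gimp_iff {m N : ℕ} (M : Matrix (Fin N) (Fin N) ℂ) :
    M ∈ Gimp m 1 N ↔ ∃ (θ : Fin N → ℂ) (τ : Fin N → Fin N), Function.Injective τ ∧
      (∀ i, θ i ^ m = 1) ∧ ∀ v i, (M *ᵥ v) i = θ i * v (τ i) := by
  have key : ∀ (θ : Fin N → ℂ) (σ : Equiv.Perm (Fin N)) v i,
      (monomialMatrix θ σ *ᵥ v) i = θ i * v (σ.symm i) := by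
    intro θ σ v i
    simp only [Matrix.mulVec, dotProduct, monomialMatrix, Matrix.of_apply]
    rw [Finset.sum_eq_single (σ.symm i)]
    · simp
    · intro b _ hb
      rw [if_neg, zero_mul]
      rintro rfl
      simp at hb
    · simp
  constructor
  · rintro ⟨θ, σ, h1, -, rfl⟩
    exact ⟨θ, σ.symm, σ.symm.injective, h1, key θ σ⟩
  · rintro ⟨θ, τ, hτ, h1, h⟩
    refine ⟨θ, (Equiv.ofBijective τ (Finite.injective_iff_bijective.1 hτ)).symm, h1, ?_, ?_⟩
    · rw [Nat.div_one, ← Finset.prod_pow]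
      exact Finset.prod_eq_one fun i _ => h1 i
    · apply Matrix.mulVec_injective
      ext v i
      rw [h, key]
      simp

theorem gbar_act {n : ℕ} (hn : 0 < n) (ζ : ℂ) (v : Fin n → ℂ) (j : Fin n) :
    ((Matrix.of fun j i : Fin n =>
      if i.1 = 0 then (if j.1 = n - 1 then ζ ^ n else 0)
      else if j.1 + 1 = i.1 then 1 else 0) *ᵥ v) j =
      ζ ^ (n * ((j.1 + 1) / n)) * v ⟨(j.1 + 1) % n, Nat.mod_lt _ hn⟩ := by
  simp only [Matrix.mulVec, dotProduct, Matrix.of_apply]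
  have hj := j.2
  rw [Finset.sum_eq_single ⟨(j.1 + 1) % n, Nat.mod_lt _ hn⟩]
  · congr 1
    dsimp only
    by_cases h : j.1 + 1 < n
    · simp [Nat.mod_eq_of_lt h, Nat.div_eq_of_lt h]
    · have h' : j.1 + 1 = n := by omega
      simp only [h', Nat.mod_self, Nat.div_self hn]
      simp
      omega
  · intro b _ hb
    have hb' : b.1 ≠ (j.1 + 1) % n := fun h => hb (Fin.ext h)
    have hbn := b.2
    by_cases h : j.1 + 1 < n
    · rw [Nat.mod_eq_of_lt h] at hb'
      rw [if_neg (show ¬ j.1 = n - 1 by omega), if_neg (show ¬ j.1 + 1 = b.1 by omega)]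
      simp
    · have h' : j.1 + 1 = n := by omega
      rw [h', Nat.mod_self] at hb'
      rw [if_neg hb', if_neg (by omega), zero_mul]
  · simp

theorem gbar_pow {n : ℕ} (hn : 0 < n) (ζ : ℂ) (g : Matrix (Fin n) (Fin n) ℂ)
    (hg : ∀ v j, (g *ᵥ v) j =
      ζ ^ (n * ((j.1 + 1) / n)) * v ⟨(j.1 + 1) % n, Nat.mod_lt _ hn⟩) (q : ℕ) :
    ∀ v j, (g ^ q *ᵥ v) j =
      ζ ^ (n * ((j.1 + q) / n)) * v ⟨(j.1 + q) % n, Nat.mod_lt _ hn⟩ := by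
  induction q with
  | zero =>
    intro v j
    have := Nat.mod_eq_of_lt j.2
    have h2 := Nat.div_eq_of_lt j.2
    simp [this, h2]
  | succ q ih =>
    intro v j
    rw [pow_succ', ← Matrix.mulVec_mulVec, hg, ih, ← mul_assoc, ← pow_add, ← mul_add]
    have e1 : (j.1 + (q + 1)) = ((j.1 + 1) % n + q) + n * ((j.1 + 1) / n) := by
      have := Nat.mod_add_div (j.1 + 1) n
      omega
    congr 2
    · congr 1
      rw [e1, Nat.add_mul_div_left _ _ hn, add_comm]
    · ext
      simp only
      rw [e1, Nat.add_mul_mod_self_left]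

/-- Let `m ≥ 2`, let `k > 1` divide `n`, `n' = n/k`, `ζ` a primitive
`nm`-th root of unity, `ḡ ∈ G(m,1,n)` the monomial matrix with `e_i ↦ e_{i-1}`
(`2 ≤ i ≤ n`), `e_1 ↦ ζ^n e_n`, and `E` the `ζ^{n'}`-eigenspace of `ḡ^{n'}`.  Then
`E = ℂě_1 ⊕ ... ⊕ ℂě_{n'}` with `ě_j = (1/√k) Σ_p ζ^{p n'} e_{j + p n'}`, and the
reflection subquotient `π_E(N_E)` is, via a `ℂ`-linear isomorphism `E ≅ ℂ^{n'}`, equal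
to `G(km, 1, n')`: the `km`-reflection subquotient of `G(m,1,n)` is `G(km,1,n/k)`. -/
theorem statement_9 (m n k n' : ℕ) (hm : 2 ≤ m) (hn : 0 < n) (hk : 1 < k)
    (hkn : k ∣ n) (hn' : n' = n / k)
    (ζ : ℂ) (hζ : IsPrimitiveRoot ζ (n * m))
    (gbar : Matrix (Fin n) (Fin n) ℂ)
    (hgbar : gbar = Matrix.of fun j i : Fin n =>
      if i.1 = 0 then (if j.1 = n - 1 then ζ ^ n else 0)
      else if j.1 + 1 = i.1 then 1 else 0)
    (E : Submodule ℂ (Fin n → ℂ))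
    (hE : E = eigSpace (gbar ^ n') (ζ ^ n'))
    (echeck : Fin n' → (Fin n → ℂ))
    (hecheck : ∀ (j : Fin n') (i : Fin n),
      echeck j i = if i.1 % n' = j.1
        then (1 / (Real.sqrt k : ℂ)) * ζ ^ ((i.1 / n') * n') else 0) :
    gbar ∈ Gimp m 1 n ∧
    E = Submodule.span ℂ (Set.range echeck) ∧
    ∃ Φ : (Fin n' → ℂ) →ₗ[ℂ] (Fin n → ℂ), Function.Injective Φ ∧
      LinearMap.range Φ = E ∧
      Gimp (k * m) 1 n' =
        {M' : Matrix (Fin n') (Fin n') ℂ | ∃ M, M ∈ Gimp m 1 n ∧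
          (∀ v ∈ E, M.mulVec v ∈ E) ∧ ∀ t : Fin n' → ℂ,
            M.mulVec (Φ t) = Φ (M'.mulVec t)} := by
  have hk0 : 0 < k := by omega
  obtain ⟨d, rfl⟩ := hkn
  rw [Nat.mul_div_cancel_left _ hk0] at hn'
  subst hn'
  have hd : 0 < n' := Nat.pos_of_mul_pos_left hn
  have hact : ∀ v j, (gbar *ᵥ v) j = ζ ^ (k * n' * ((j.1 + 1) / (k * n'))) *
      v ⟨(j.1 + 1) % (k * n'), Nat.mod_lt _ hn⟩ := by
    subst hgbar
    exact gbar_act hn ζ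
  have hpow := gbar_pow hn ζ gbar hact n'
  have hζ1 : ζ ^ (k * n' * m) = 1 := hζ.pow_eq_one
  have hζ0 : ζ ≠ 0 := hζ.ne_zero (by positivity)
  set c : ℂ := 1 / (Real.sqrt k : ℂ) with hc
  have hc0 : c ≠ 0 := by
    rw [hc]
    have : Real.sqrt k ≠ 0 := (Real.sqrt_pos.2 (by exact_mod_cast hk0)).ne'
    exact one_div_ne_zero (by exact_mod_cast this)
  let red : Fin (k * n') → Fin n' := fun i => ⟨i.1 % n', Nat.mod_lt _ hd⟩
  let w : Fin (k * n') → ℂ := fun i => ζ ^ ((i.1 / n') * n')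
  have hw0 : ∀ i, w i ≠ 0 := fun i => pow_ne_zero _ hζ0
  let Φ : (Fin n' → ℂ) →ₗ[ℂ] (Fin (k * n') → ℂ) :=
    { toFun := fun t i => c * w i * t (red i)
      map_add' := by intro x y; ext i; simp [mul_add]
      map_smul' := by intro a x; ext i; simp; ring }
  have hΦ : ∀ t i, Φ t i = c * w i * t (red i) := fun t i => rfl
  have hlt : ∀ j : Fin n', j.1 < k * n' := fun j =>
    lt_of_lt_of_le j.2 (Nat.le_mul_of_pos_left _ hk0)
  let emb : Fin n' → Fin (k * n') := fun j => ⟨j.1, hlt j⟩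
  have hre : ∀ j, red (emb j) = j := fun j => Fin.ext (Nat.mod_eq_of_lt j.2)
  have hwe : ∀ j, w (emb j) = 1 := by
    intro j
    simp [w, emb, Nat.div_eq_of_lt j.2]
  have hΦinj : Function.Injective Φ := by
    intro s t h
    ext j
    have := congrFun h (emb j)
    rw [hΦ, hΦ, hre, hwe, mul_one] at this
    exact mul_left_cancel₀ hc0 this
  have hmemE : ∀ v, v ∈ E ↔ ∀ j : Fin (k * n'), ζ ^ (k * n' * ((j.1 + n') / (k * n'))) *
      v ⟨(j.1 + n') % (k * n'), Nat.mod_lt _ hn⟩ = ζ ^ n' * v j := by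
    intro v
    rw [hE, eigSpace, Module.End.mem_eigenspace_iff, Matrix.mulVecLin_apply, funext_iff]
    simp only [hpow, Pi.smul_apply, smul_eq_mul]
  have hrange : LinearMap.range Φ = E := by
    ext v
    rw [hmemE, LinearMap.mem_range]
    constructor
    · rintro ⟨t, rfl⟩ j
      have hj := j.2
      rw [hΦ, hΦ]
      have e1 : red ⟨(j.1 + n') % (k * n'), Nat.mod_lt _ hn⟩ = red j := by
        ext
        simp [red]
      rw [e1]
      have e2 : ζ ^ (k * n' * ((j.1 + n') / (k * n'))) *
          w ⟨(j.1 + n') % (k * n'), Nat.mod_lt _ hn⟩ = ζ ^ n' * w j := by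
        simp only [w]
        rw [← pow_add, ← pow_add]
        congr 1
        have h1 : (j.1 + n') / n' = j.1 / n' + 1 := Nat.add_div_right _ hd
        have h2 := Nat.mod_add_div (j.1 + n') (k * n')
        have h3 : (j.1 + n') / n' =
            (j.1 + n') % (k * n') / n' + k * ((j.1 + n') / (k * n')) := by
          conv_lhs => rw [← h2]
          rw [show k * n' * ((j.1 + n') / (k * n')) = n' * (k * ((j.1 + n') / (k * n'))) by ring,
            Nat.add_mul_div_left _ _ hd]
        calc _ = ((j.1 + n') % (k * n') / n' + k * ((j.1 + n') / (k * n'))) * n' := by ring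
          _ = _ := by rw [← h3, h1]; ring
      linear_combination c * t (red j) * e2
    · intro h
      have key : ∀ p r, (hr : r < k * n') → r < n' → (hp : r + p * n' < k * n') →
          v ⟨r + p * n', hp⟩ = ζ ^ (p * n') * v ⟨r, hr⟩ := by
        intro p
        induction p with
        | zero => intro r hr hr' hp; simp
        | succ p ih =>
          intro r hr hr' hp
          have hp' : r + p * n' + n' < k * n' := by
            rw [add_assoc, ← Nat.succ_mul]; exact hp
          have hp2 : r + p * n' < k * n' := by omega
          have := h ⟨r + p * n', hp2⟩
          simp only [Nat.mod_eq_of_lt hp', Nat.div_eq_of_lt hp', mul_zero, pow_zero, one_mul] at this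
          rw [ih r hr hr' hp2, ← mul_assoc, ← pow_add] at this
          have e : r + (p + 1) * n' = r + p * n' + n' := by ring
          simp only [e]
          rw [this]
          congr 2
          ring
      refine ⟨fun j => c⁻¹ * v (emb j), ?_⟩
      ext i
      rw [hΦ]
      have hi : i.1 % n' + i.1 / n' * n' = i.1 := by
        rw [mul_comm (i.1 / n') n']; exact Nat.mod_add_div _ _
      have := key (i.1 / n') (i.1 % n') (hlt (red i)) (Nat.mod_lt _ hd) (by rw [hi]; exact i.2)
      simp only [hi] at this
      rw [this]
      simp only [w, emb, red]
      field_simp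
  refine ⟨?_, ?_, Φ, hΦinj, hrange, ?_⟩
  · rw [mem_Gimp_iff]
    refine ⟨_, _, ?_, ?_, hact⟩
    · intro i j hij
      simp only [Fin.mk.injEq] at hij
      have hi := i.2
      have hj := j.2
      ext
      have := Nat.ModEq.add_right_cancel' 1 (show i.1 + 1 ≡ j.1 + 1 [MOD (k * n')] from hij)
      exact this.eq_of_lt_of_lt hi hj
    · intro i
      rw [← pow_mul, show k * n' * ((i.1 + 1) / (k * n')) * m =
        k * n' * m * ((i.1 + 1) / (k * n')) by ring, pow_mul, hζ1, one_pow]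
  · rw [← hrange]
    have he : ∀ j, echeck j = Φ (Pi.single j 1) := by
      intro j
      ext i
      rw [hecheck, hΦ, Pi.single_apply]
      by_cases h : i.1 % n' = j.1
      · rw [if_pos h, if_pos (Fin.ext h)]
        simp [w]
      · rw [if_neg h, if_neg (fun h' => h (congrArg Fin.val h'))]
        simp
    have he' : echeck = fun j => Φ (Pi.basisFun ℂ (Fin n') j) := by
      ext j : 1
      rw [he, Pi.basisFun_apply]
    rw [he', Set.range_comp' Φ, ← LinearMap.map_span, Module.Basis.span_eq, LinearMap.range_eq_map]
  · have hinv : ∀ M : Matrix (Fin (k * n')) (Fin (k * n')) ℂ,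
        ∀ M' : Matrix (Fin n') (Fin n') ℂ,
        (∀ t : Fin n' → ℂ, M.mulVec (Φ t) = Φ (M'.mulVec t)) → ∀ v ∈ E, M.mulVec v ∈ E := by
      intro M M' h v hv
      rw [← hrange] at hv ⊢
      obtain ⟨t, rfl⟩ := hv
      exact ⟨_, (h t).symm⟩
    have hη : IsPrimitiveRoot (ζ ^ n') (k * m) :=
      hζ.pow (by positivity) (by ring)
    ext M'
    rw [mem_Gimp_iff]
    constructor
    · rintro ⟨θ', τ', hτ', hθ', hM'⟩
      have : ∀ j, ∃ a, (ζ ^ n') ^ a = θ' j := by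
        intro j
        have : NeZero (k * m) := ⟨by positivity⟩
        obtain ⟨a, -, ha⟩ := hη.eq_pow_of_pow_eq_one (hθ' j)
        exact ⟨a, ha⟩
      choose a ha using this
      have hq : ∀ (j : Fin n') (p : ℕ), j.1 + n' * (p % k) < k * n' := by
        intro j p
        have h1 : p % k + 1 ≤ k := Nat.mod_lt p hk0
        have := j.2
        nlinarith
      let τ : Fin (k * n') → Fin (k * n') := fun i =>
        ⟨(τ' (red i)).1 + n' * ((a (red i) + i.1 / n') % k), hq _ _⟩
      have hτr : ∀ i, red (τ i) = τ' (red i) := by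
        intro i
        ext
        simp only [τ, red, Nat.add_mul_mod_self_left]
        exact Nat.mod_eq_of_lt (τ' _).2
      have hτd : ∀ i, (τ i).1 / n' = (a (red i) + i.1 / n') % k := by
        intro i
        simp only [τ]
        rw [Nat.add_mul_div_left _ _ hd, Nat.div_eq_of_lt (τ' _).2, zero_add]
      let θ : Fin (k * n') → ℂ := fun i => ζ ^ (k * n' * ((a (red i) + i.1 / n') / k))
      let M := Matrix.of fun i i' : Fin (k * n') => if i' = τ i then θ i else 0
      have hM : ∀ v i, (M *ᵥ v) i = θ i * v (τ i) := by
        intro v i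
        simp [M, Matrix.mulVec, dotProduct]
      have hfin : ∀ t : Fin n' → ℂ, M.mulVec (Φ t) = Φ (M'.mulVec t) := by
        intro t
        ext i
        rw [hM, hΦ, hΦ, hM', hτr]
        have e : θ i * w (τ i) = w i * θ' (red i) := by
          rw [← ha]
          simp only [θ, w]
          rw [hτd, ← pow_mul, ← pow_add, ← pow_add]
          congr 1
          have := Nat.mod_add_div (a (red i) + i.1 / n') k
          calc _ = ((a (red i) + i.1 / n') % k + k * ((a (red i) + i.1 / n') / k)) * n' := by ring
            _ = _ := by rw [this]; ring
        linear_combination c * t (τ' (red i)) * e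
      refine ⟨M, (mem_Gimp_iff M).2 ⟨θ, τ, ?_, ?_, hM⟩, hinv M M' hfin, hfin⟩
      · intro x y hxy
        have h1 : red x = red y := by
          apply hτ'
          rw [← hτr, ← hτr, hxy]
        have h2 : (a (red x) + x.1 / n') % k = (a (red x) + y.1 / n') % k := by
          rw [← hτd, hxy, hτd, h1]
        have h3 : x.1 / n' = y.1 / n' :=
          (Nat.ModEq.add_left_cancel' _ h2).eq_of_lt_of_lt
            (Nat.div_lt_of_lt_mul (x.2.trans_eq (mul_comm _ _)))
            (Nat.div_lt_of_lt_mul (y.2.trans_eq (mul_comm _ _)))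
        have h4 : x.1 % n' = y.1 % n' := congrArg Fin.val h1
        ext
        rw [← Nat.mod_add_div x.1 n', ← Nat.mod_add_div y.1 n', h3, h4]
      · intro i
        simp only [θ]
        rw [← pow_mul, show k * n' * ((a (red i) + i.1 / n') / k) * m =
          k * n' * m * ((a (red i) + i.1 / n') / k) by ring, pow_mul, hζ1, one_pow]
    · rintro ⟨M, hMG, -, hM⟩
      obtain ⟨θ, τ, hτ, hθ, hact2⟩ := (mem_Gimp_iff M).1 hMG
      have hrel : ∀ t i, θ i * (w (τ i) * t (red (τ i))) = w i * (M' *ᵥ t) (red i) := by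
        intro t i
        have := congrFun (hM t) i
        rw [hact2, hΦ, hΦ] at this
        apply mul_left_cancel₀ hc0
        linear_combination this
      have hM' : ∀ t j, (M' *ᵥ t) j = (θ (emb j) * w (τ (emb j))) * t (red (τ (emb j))) := by
        intro t j
        have := hrel t (emb j)
        rw [hre, hwe] at this
        linear_combination -this
      refine ⟨_, fun j => red (τ (emb j)), ?_, ?_, hM'⟩
      · apply Finite.injective_iff_surjective.2
        intro l
        obtain ⟨i, hi⟩ := (Finite.injective_iff_surjective.1 hτ) (emb l)
        refine ⟨red i, ?_⟩
        by_contra hne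
        have := hrel (Pi.single l 1) i
        rw [hM', hi, hre, hwe, Pi.single_eq_same, Pi.single_eq_of_ne hne] at this
        simp only [mul_one, mul_zero] at this
        have h1 := hθ i
        rw [this, zero_pow (by omega)] at h1
        exact zero_ne_one h1
      · intro j
        rw [mul_pow, mul_comm k m, pow_mul, hθ, one_pow, one_mul]
        simp only [w]
        rw [← pow_mul, show ((τ (emb j)).1 / n' * n') * (m * k) =
          k * n' * m * ((τ (emb j)).1 / n') by ring, pow_mul, hζ1, one_pow]

end
end Paper
end

section
/- Let m ≥ 2, n ≥ 1, let ζ be a primitive nm-th root of unity, let g ∈ GL_{n+1}(C) be the monomial matrix sending e_i ↦ e_{i−1} (2 ≤ i ≤ n), e_1 ↦ ζ^n e_n, e_{n+1} ↦ ζ^{−n} e_{n+1}, and let q_1 = (1/√n)(1, ζ, ζ^2, ..., ζ^{n−1}, 0)^T ∈ C^{n+1}. Then g ∈ G(m,m,n+1), g q_1 = ζ q_1, and q_1 lies on none of the reflection hyperplanes of G(m,m,n+1) (the orthogonal complements of e_i − ζ^{kn} e_j for 1 ≤ i < j ≤ n+1, 0 ≤ k < m); hence g is a ζ-regular element and (g,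 ζ, q_1) is an admissible triplet of G(m,m,n+1). -/
open Matrix MvPolynomial

namespace Paper

noncomputable section

/-- Let `m ≥ 2`, `n ≥ 1`, `ζ` a primitive `nm`-th root of unity, `g` the
monomial matrix with `e_i ↦ e_{i-1}` (`2 ≤ i ≤ n`), `e_1 ↦ ζ^n e_n`,
`e_{n+1} ↦ ζ^{-n} e_{n+1}`, and `q_1 = (1/√n)(1, ζ, ..., ζ^{n-1}, 0)`.  Then
`g ∈ G(m,m,n+1)`, `g q_1 = ζ q_1`, and `q_1` is orthogonal to none of the roots
`e_i - ζ^{kn} e_j` (`i < j`, `0 ≤ k < m`) of `G(m,m,n+1)`, i.e. it lies on no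
reflection hyperplane; hence `g` is `ζ`-regular and `(g, ζ, q_1)` is an admissible
triplet of `G(m,m,n+1)`. -/
theorem statement_10 (m n : ℕ) (hm : 2 ≤ m) (hn : 1 ≤ n)
    (ζ : ℂ) (hζ : IsPrimitiveRoot ζ (n * m))
    (g : Matrix (Fin (n + 1)) (Fin (n + 1)) ℂ)
    (hg : g = Matrix.of fun j i : Fin (n + 1) =>
      if i.1 = 0 then (if j.1 = n - 1 then ζ ^ n else 0)
      else if i.1 = n then (if j.1 = n then (ζ ^ n)⁻¹ else 0)
      else if j.1 + 1 = i.1 then 1 else 0)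
    (q₁ : Fin (n + 1) → ℂ)
    (hq₁ : q₁ = fun i => if i.1 < n then (1 / (Real.sqrt n : ℂ)) * ζ ^ i.1 else 0) :
    g ∈ Gimp m m (n + 1) ∧
    g.mulVec q₁ = ζ • q₁ ∧
    (∀ i j : Fin (n + 1), i < j → ∀ kk : ℕ, kk < m →
      herm q₁ ((Pi.single i 1 : Fin (n + 1) → ℂ) -
        ζ ^ (kk * n) • (Pi.single j 1 : Fin (n + 1) → ℂ)) ≠ 0) := by
  have hN : n * m ≠ 0 := by positivity
  have hζ0 : ζ ≠ 0 := hζ.ne_zero hN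
  have hζ1 : ζ ^ (n * m) = 1 := hζ.pow_eq_one
  have hs : (1 / (Real.sqrt n : ℂ)) ≠ 0 := by
    have : Real.sqrt n ≠ 0 := by
      apply ne_of_gt
      apply Real.sqrt_pos.2
      exact_mod_cast hn
    exact one_div_ne_zero (by exact_mod_cast this)
  let f : Fin (n + 1) → Fin (n + 1) := fun i =>
    if i.1 = 0 then ⟨n - 1, by omega⟩ else if i.1 = n then i else ⟨i.1 - 1, by omega⟩
  let f' : Fin (n + 1) → Fin (n + 1) := fun j =>
    if h : j.1 = n then j else if j.1 = n - 1 then ⟨0, by omega⟩ else ⟨j.1 + 1, by omega⟩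
  have hl : Function.LeftInverse f' f := by
    intro i
    have := i.2
    apply Fin.ext
    simp only [f, f']
    split_ifs <;> simp_all <;> omega
  have hr : Function.RightInverse f' f := by
    intro i
    have := i.2
    apply Fin.ext
    simp only [f, f']
    split_ifs <;> simp_all <;> omega
  let σ : Equiv.Perm (Fin (n + 1)) := ⟨f, f', hl, hr⟩
  let θ : Fin (n + 1) → ℂ := fun j =>
    if j.1 = n then (ζ ^ n)⁻¹ else if j.1 = n - 1 then ζ ^ n else 1
  have hgm : g = monomialMatrix θ σ := by
    subst hg
    ext j i
    have hi := i.2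
    have hj := j.2
    simp only [monomialMatrix, Matrix.of_apply, θ, σ, Equiv.coe_fn_mk, f, Fin.ext_iff]
    by_cases h0 : i.1 = 0
    · have h1 : n - 1 ≠ n := by omega
      simp [h0, h1]
    · by_cases h1 : i.1 = n
      · simp [h0, h1, show n ≠ 0 by omega]
      · have h2 : i.1 - 1 ≠ n := by omega
        have h3 : i.1 - 1 ≠ n - 1 := by omega
        have h4 : j.1 + 1 = i.1 ↔ j.1 = i.1 - 1 := by omega
        simp [h0, h1, h2, h3, h4]
  refine ⟨⟨θ, σ, ?_, ?_, hgm⟩, ?_, ?_⟩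
  · intro i
    simp only [θ]
    split_ifs
    · rw [inv_pow, ← pow_mul, hζ1, inv_one]
    · rw [← pow_mul, hζ1]
    · simp
  · have : ∏ i, θ i = 1 := by
      obtain ⟨k, rfl⟩ : ∃ k, n = k + 1 := ⟨n - 1, by omega⟩
      rw [Fin.prod_univ_castSucc, Fin.prod_univ_castSucc]
      have : ∀ x : Fin k, θ x.castSucc.castSucc = 1 := by
        intro x
        have := x.2
        simp only [θ, Fin.val_castSucc]
        rw [if_neg (by omega), if_neg (by omega)]
      simp [this]
      simp [θ]
      field_simp
    rw [this, one_pow]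
  · have key : ∀ j, (g.mulVec q₁) j = θ j * q₁ (f' j) := by
      intro j
      rw [hgm]
      simp only [Matrix.mulVec, dotProduct, monomialMatrix, Matrix.of_apply]
      rw [Finset.sum_eq_single (f' j)]
      · have : σ (f' j) = j := hr j
        simp [this]
      · intro b _ hb
        rw [if_neg, zero_mul]
        rintro rfl
        exact hb (hl b).symm
      · simp
    ext j
    rw [key, hq₁]
    have hj := j.2
    simp only [θ, f', Pi.smul_apply, smul_eq_mul]
    by_cases h1 : j.1 = n
    · simp [h1]
    · by_cases h2 : j.1 = n - 1
      · have h3 : n - 1 ≠ n := by omega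
        obtain ⟨k, rfl⟩ : ∃ k, n = k + 1 := ⟨n - 1, by omega⟩
        simp at h2
        simp [h2]
        ring
      · simp only [if_neg h1, if_neg h2, dif_neg h1]
        rw [if_pos (by omega), if_pos (by omega)]
        ring
  · intro i j hij k hk
    have hij' : i.1 < j.1 := hij
    have hj := j.2
    have hh : herm q₁ ((Pi.single i 1 : Fin (n + 1) → ℂ) -
        ζ ^ (k * n) • (Pi.single j 1 : Fin (n + 1) → ℂ)) =
        q₁ i - q₁ j * (starRingEnd ℂ) (ζ ^ (k * n)) := by
      simp [herm, mul_sub, Finset.sum_sub_distrib, Pi.single_apply, apply_ite (starRingEnd ℂ)]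
    have hnorm : ‖ζ‖ = 1 := hζ.norm'_eq_one hN
    have hc : (starRingEnd ℂ) (ζ ^ (k * n)) = (ζ ^ (k * n))⁻¹ := by
      rw [Complex.inv_eq_conj]
      rw [norm_pow, hnorm, one_pow]
    rw [hh, hc, hq₁]
    simp only
    rw [if_pos (by omega)]
    by_cases h : j.1 < n
    · rw [if_pos h]
      intro h0
      rw [mul_assoc, ← mul_sub, mul_eq_zero] at h0
      have h1 := sub_eq_zero.1 (h0.resolve_left hs)
      rw [eq_mul_inv_iff_mul_eq₀ (pow_ne_zero _ hζ0), ← pow_add] at h1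
      have hb : (k + 1) * n ≤ n * m := by
        rw [mul_comm n m]
        exact Nat.mul_le_mul_right _ hk
      have hb2 : n * 1 ≤ n * m := Nat.mul_le_mul_left _ (by omega)
      rw [add_mul] at hb
      have := hζ.pow_inj (by omega) (by omega) h1
      rcases Nat.eq_zero_or_pos k with h5 | h5
      · subst h5
        omega
      · have := Nat.mul_le_mul_right n h5
        omega
    · rw [if_neg h]
      simp only [zero_mul, sub_zero]
      exact mul_ne_zero hs (pow_ne_zero _ hζ0)

end
end Paper
end

section
/- Let m ≥ 2, n ≥ 1, let ζ be a primitive nm-th root of unity, let ḡ ∈ GL_n(C) be the monomial matrix sending e_i ↦ e_{i−1} (2 ≤ i ≤ n), e_1 ↦ ζ^n e_n, and let q̄_1 = (1/√n)(1, ζ, ζ^2, ..., ζ^{n−1})^T ∈ C^n. Then ḡ ∈ G(m,1,n), ḡ q̄_1 = ζ q̄_1, and q̄_1 lies on none of the reflection hyperplanes of G(m,1,n) (the orthogonal complements of e_i − ζ^{kn} e_j for 1 ≤ i < j ≤ n, 0 ≤ k < m, and of e_i for 1 ≤ i ≤ n); hence ḡ is a ζ-regular element and (ḡ, ζ, q̄_1)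 is an admissible triplet of G(m,1,n). -/
open Matrix MvPolynomial

namespace Paper

noncomputable section

/-- Let `m ≥ 2`, `n ≥ 1`, `ζ` a primitive `nm`-th root of unity, `ḡ` the
monomial matrix with `e_i ↦ e_{i-1}` (`2 ≤ i ≤ n`), `e_1 ↦ ζ^n e_n`, and
`q̄_1 = (1/√n)(1, ζ, ..., ζ^{n-1})`.  Then `ḡ ∈ G(m,1,n)`, `ḡ q̄_1 = ζ q̄_1`, and `q̄_1`
is orthogonal to none of the roots `e_i - ζ^{kn} e_j` (`i < j`, `0 ≤ k < m`) and `e_i`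
of `G(m,1,n)`, i.e. it lies on no reflection hyperplane; hence `ḡ` is `ζ`-regular and
`(ḡ, ζ, q̄_1)` is an admissible triplet of `G(m,1,n)`. -/
theorem statement_11 (m n : ℕ) (hm : 2 ≤ m) (hn : 1 ≤ n)
    (ζ : ℂ) (hζ : IsPrimitiveRoot ζ (n * m))
    (gbar : Matrix (Fin n) (Fin n) ℂ)
    (hgbar : gbar = Matrix.of fun j i : Fin n =>
      if i.1 = 0 then (if j.1 = n - 1 then ζ ^ n else 0)
      else if j.1 + 1 = i.1 then 1 else 0)
    (qbar₁ : Fin n → ℂ)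
    (hqbar₁ : qbar₁ = fun i => (1 / (Real.sqrt n : ℂ)) * ζ ^ i.1) :
    gbar ∈ Gimp m 1 n ∧
    gbar.mulVec qbar₁ = ζ • qbar₁ ∧
    (∀ i j : Fin n, i < j → ∀ kk : ℕ, kk < m →
      herm qbar₁ ((Pi.single i 1 : Fin n → ℂ) -
        ζ ^ (kk * n) • (Pi.single j 1 : Fin n → ℂ)) ≠ 0) ∧
    (∀ i : Fin n, herm qbar₁ (Pi.single i 1 : Fin n → ℂ) ≠ 0) := by
  obtain ⟨k, rfl⟩ : ∃ k, n = k + 1 := ⟨n - 1, by omega⟩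
  have hpos : 0 < (k + 1) * m := by positivity
  have hζ0 : ζ ≠ 0 := hζ.ne_zero hpos.ne'
  have hc : (1 / (Real.sqrt ((k + 1 : ℕ) : ℝ) : ℂ)) ≠ 0 := by
    apply one_div_ne_zero
    have : Real.sqrt ((k + 1 : ℕ) : ℝ) ≠ 0 := by positivity
    exact_mod_cast this
  generalize hcc : (1 / (Real.sqrt ((k + 1 : ℕ) : ℝ) : ℂ)) = c at *
  have hent : ∀ j i, gbar j i = if i = finRotate (k + 1) j then
      (if j = Fin.last k then ζ ^ (k + 1) else 1) else 0 := by
    intro j i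
    have h1 : (i = finRotate (k + 1) j) ↔ i.1 = if j = Fin.last k then 0 else j.1 + 1 := by
      rw [Fin.ext_iff, coe_finRotate]
    have h2 : j = Fin.last k ↔ j.1 = k := by rw [Fin.ext_iff]; rfl
    simp only [hgbar, Matrix.of_apply, h1, h2]
    have := j.2
    have := i.2
    split_ifs <;> first | rfl | omega
  have hnorm : ∀ a : ℕ, (starRingEnd ℂ) (ζ ^ a) * ζ ^ a = 1 := by
    intro a
    have : ‖ζ‖ = 1 := hζ.norm'_eq_one hpos.ne'
    rw [mul_comm, Complex.mul_conj, Complex.normSq_eq_norm_sq]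
    simp [this]
  refine ⟨⟨fun j => if j = Fin.last k then ζ ^ (k + 1) else 1, (finRotate (k + 1)).symm,
    ?_, ?_, ?_⟩, ?_, ?_, ?_⟩
  · intro i
    dsimp only
    split_ifs
    · rw [← pow_mul, hζ.pow_eq_one]
    · simp
  · rw [Finset.prod_ite_eq' Finset.univ (Fin.last k)]
    simp [← pow_mul, hζ.pow_eq_one]
  · ext j i
    rw [hent]
    simp only [monomialMatrix, Matrix.of_apply, Equiv.eq_symm_apply]
    by_cases h : i = finRotate (k + 1) j
    · subst h; simp
    · rw [if_neg h, if_neg (fun h' => h h'.symm)]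
  · ext j
    simp only [Matrix.mulVec, dotProduct, hent, ite_mul, zero_mul, Finset.sum_ite_eq',
      Finset.sum_ite_eq, Finset.mem_univ, if_true, hqbar₁, Pi.smul_apply, smul_eq_mul]
    rw [coe_finRotate]
    split_ifs with h
    · subst h
      simp only [Fin.val_last]; ring
    · ring
  · intro i j hij kk hkk h
    have hh : herm qbar₁ ((Pi.single i 1 : Fin (k + 1) → ℂ) -
        ζ ^ (kk * (k + 1)) • (Pi.single j 1 : Fin (k + 1) → ℂ)) =
        qbar₁ i - qbar₁ j * (starRingEnd ℂ) (ζ ^ (kk * (k + 1))) := by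
      simp [herm, mul_sub, Finset.sum_sub_distrib, Pi.single_apply, apply_ite (starRingEnd ℂ)]
    rw [hh, hqbar₁] at h
    have h3 : c * (ζ ^ (i.1 + kk * (k + 1)) - ζ ^ j.1) = 0 := by
      have := hnorm (kk * (k + 1))
      dsimp only at h
      rw [pow_add]
      linear_combination ζ ^ (kk * (k + 1)) * h + c * ζ ^ j.1 * this
    have h4 : ζ ^ (i.1 + kk * (k + 1)) = ζ ^ j.1 :=
      sub_eq_zero.mp ((mul_eq_zero.mp h3).resolve_left hc)
    have h5 : i.1 + kk * (k + 1) ≡ j.1 [MOD (k + 1) * m] := by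
      have hu : (Units.mk0 ζ hζ0) ^ (i.1 + kk * (k + 1)) = (Units.mk0 ζ hζ0) ^ j.1 := by
        ext
        simpa using h4
      have ho : (k + 1) * m = orderOf (Units.mk0 ζ hζ0) := by
        rw [← orderOf_units, Units.val_mk0, ← hζ.eq_orderOf]
      rw [ho]
      exact pow_eq_pow_iff_modEq.mp hu
    have h6 : i.1 + kk * (k + 1) ≡ j.1 [MOD (k + 1)] := h5.of_mul_right m
    have h7 : i.1 = j.1 := by
      have := h6
      unfold Nat.ModEq at this
      rwa [Nat.add_mul_mod_self_right, Nat.mod_eq_of_lt i.2, Nat.mod_eq_of_lt j.2] at this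
    exact absurd hij (by rw [Fin.lt_def]; omega)
  · intro i
    have hh : herm qbar₁ (Pi.single i 1 : Fin (k + 1) → ℂ) = qbar₁ i := by
      simp [herm, Pi.single_apply, apply_ite (starRingEnd ℂ)]
    rw [hh, hqbar₁]
    exact mul_ne_zero hc (pow_ne_zero _ hζ0)

end
end Paper
end

section
/- Let ζ = e^{πi/6}, let G_35 = E_6 ⊂ GL_6(C) be the finite complex reflection group generated by the six order-2 reflections s(α_1), ..., s(α_6) with the simple roots α_1 = e_2 − e_3 + (1/√2)e_5 + √(3/2)e_6, α_2 = e_3 − e_4 − √2 e_5, α_3 = 2e_4, α_4 = e_3 − e_4 + √2 e_5, α_5 = e_2 − e_3 − (1/√2)e_5 − √(3/2)e_6, α_6 = e_1 − e_2 − e_3 − e_4, and let g = s(α_1)s(α_2)s(α_3)s(α_4)s(α_5)s(α_6) be the resulting Coxeter element. Let E be the ζ^6-eigenspace (i.e. the (−1)-eigenspace) of g^6, a 4-dimensional subspace, let N_E = {s ∈ G_35 : s(E) ⊆ E}, and let π_E be restriction to E. Then there exists a C-linear isomorphism ψ : E → C^4 such that ψ ∘ π_E(N_E) ∘ ψ^{−1}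 = G_28, where G_28 = F_4 ⊂ GL_4(C) is generated by the four order-2 reflections with roots β_1 = e_1 − e_2, β_2 = e_2 − e_3, β_3 = √2 e_3, β_4 = −(1/√2)(e_1 + e_2 + e_3 + e_4). In other words, the 2-reflection subquotient of G_35 = E_6 is isomorphic to G_28 = F_4. -/
open Matrix MvPolynomial

namespace Paper

noncomputable section

abbrev cst : ℤ →+* ℂ := Int.castRingHom ℂ

/-- Cartan matrix of `E₆`. -/
def K6 : Matrix (Fin 6) (Fin 6) ℤ := !![2, -1, 0, 0, 0, 0; -1, 2, -1, 0, 0, 0; 0, -1, 2, -1, 0, -1; 0, 0, -1, 2, -1, 0; 0, 0, 0, -1, 2, 0; 0, 0, -1, 0, 0, 2]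
/-- Three times the inverse Cartan matrix. -/
def K6i : Matrix (Fin 6) (Fin 6) ℤ := !![4, 5, 6, 4, 2, 3; 5, 10, 12, 8, 4, 6; 6, 12, 18, 12, 6, 9; 4, 8, 12, 10, 5, 6; 2, 4, 6, 5, 4, 3; 3, 6, 9, 6, 3, 6]
/-- Simple reflections of `E₆` in the basis of simple roots. -/
def S6 : Fin 6 → Matrix (Fin 6) (Fin 6) ℤ := ![
  !![-1, 1, 0, 0, 0, 0; 0, 1, 0, 0, 0, 0; 0, 0, 1, 0, 0, 0; 0, 0, 0, 1, 0, 0; 0, 0, 0, 0, 1, 0; 0, 0, 0, 0, 0, 1],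
  !![1, 0, 0, 0, 0, 0; 1, -1, 1, 0, 0, 0; 0, 0, 1, 0, 0, 0; 0, 0, 0, 1, 0, 0; 0, 0, 0, 0, 1, 0; 0, 0, 0, 0, 0, 1],
  !![1, 0, 0, 0, 0, 0; 0, 1, 0, 0, 0, 0; 0, 1, -1, 1, 0, 1; 0, 0, 0, 1, 0, 0; 0, 0, 0, 0, 1, 0; 0, 0, 0, 0, 0, 1],
  !![1, 0, 0, 0, 0, 0; 0, 1, 0, 0, 0, 0; 0, 0, 1, 0, 0, 0; 0, 0, 1, -1, 1, 0; 0, 0, 0, 0, 1, 0; 0, 0, 0, 0, 0, 1],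
  !![1, 0, 0, 0, 0, 0; 0, 1, 0, 0, 0, 0; 0, 0, 1, 0, 0, 0; 0, 0, 0, 1, 0, 0; 0, 0, 0, 1, -1, 0; 0, 0, 0, 0, 0, 1],
  !![1, 0, 0, 0, 0, 0; 0, 1, 0, 0, 0, 0; 0, 0, 1, 0, 0, 0; 0, 0, 0, 1, 0, 0; 0, 0, 0, 0, 1, 0; 0, 0, 1, 0, 0, -1]]
def g0 : Matrix (Fin 6) (Fin 6) ℤ := !![0, 0, 1, 0, -1, -1; 1, 0, 1, 0, -1, -1; 0, 1, 1, 0, -1, -1; 0, 0, 1, 0, -1, 0; 0, 0, 0, 1, -1, 0; 0, 0, 1, 0, 0, -1]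
def g2 : Matrix (Fin 6) (Fin 6) ℤ := !![0, 1, 0, -1, 0, 0; 0, 1, 1, -1, -1, -1; 1, 1, 1, -1, -1, -1; 0, 1, 1, -1, 0, -1; 0, 0, 1, -1, 0, 0; 0, 1, 0, 0, -1, 0]
def C6 : Matrix (Fin 6) (Fin 6) ℤ := !![0, 0, -1, 1, 0, 0; 0, 0, -1, 0, 1, 0; 0, 0, -1, 0, 0, 0; 1, 0, -1, 0, 0, 0; 0, 1, -1, 0, 0, 0; 0, 0, 0, 0, 0, -1]
def P64 : Matrix (Fin 6) (Fin 4) ℤ := !![0, 1, -1, 0; 0, 1, 0, -1; 0, 1, 0, 0; 0, 0, 1, 0; 0, 0, 0, 1; 1, 0, 0, 0]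
def Q46 : Matrix (Fin 4) (Fin 6) ℤ := !![0, 0, 0, 0, 0, 1; 0, 0, 1, 0, 0, 0; -1, 0, 1, 0, 0, 0; 0, -1, 1, 0, 0, 0]
def R46 : Matrix (Fin 4) (Fin 6) ℤ := !![0, 0, 0, 0, 0, 2; 0, 0, 2, 0, 0, 0; -1, 0, 1, 1, 0, 0; 0, -1, 1, 0, 1, 0]
def K4 : Matrix (Fin 4) (Fin 4) ℤ := !![2, -1, 0, 0; -1, 2, -2, 0; 0, -2, 4, -2; 0, 0, -2, 4]
/-- Simple reflections of `F₄`. -/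
def T4 : Fin 4 → Matrix (Fin 4) (Fin 4) ℤ := ![
  !![-1, 1, 0, 0; 0, 1, 0, 0; 0, 0, 1, 0; 0, 0, 0, 1],
  !![1, 0, 0, 0; 1, -1, 2, 0; 0, 0, 1, 0; 0, 0, 0, 1],
  !![1, 0, 0, 0; 0, 1, 0, 0; 0, 1, -1, 1; 0, 0, 0, 1],
  !![1, 0, 0, 0; 0, 1, 0, 0; 0, 0, 1, 0; 0, 0, 1, -1]]
/-- All reflections of `F₄`, and the identity. -/
def R4 : Fin 25 → Matrix (Fin 4) (Fin 4) ℤ := ![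
  !![-1, 1, 0, 0; 0, 1, 0, 0; 0, 0, 1, 0; 0, 0, 0, 1],
  !![1, 0, 0, 0; 1, -1, 2, 0; 0, 0, 1, 0; 0, 0, 0, 1],
  !![1, 0, 0, 0; 0, 1, 0, 0; 0, 1, -1, 1; 0, 0, 0, 1],
  !![1, 0, 0, 0; 0, 1, 0, 0; 0, 0, 1, 0; 0, 0, 1, -1],
  !![0, -1, 2, 0; -1, 0, 2, 0; 0, 0, 1, 0; 0, 0, 0, 1],
  !![1, 0, 0, 0; 1, 1, -2, 2; 1, 0, -1, 2; 0, 0, 0, 1],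
  !![1, 0, 0, 0; 2, -1, 0, 2; 1, -1, 1, 1; 0, 0, 0, 1],
  !![1, 0, 0, 0; 0, 1, 0, 0; 0, 1, 0, -1; 0, 1, -1, 0],
  !![0, 1, -2, 2; -1, 2, -2, 2; -1, 1, -1, 2; 0, 0, 0, 1],
  !![1, 0, 0, 0; 1, 1, 0, -2; 1, 0, 1, -2; 1, 0, 0, -1],
  !![-1, 0, 0, 2; -2, 1, 0, 2; -1, 0, 1, 1; 0, 0, 0, 1],
  !![1, 0, 0, 0; 2, -1, 2, -2; 1, -1, 2, -1; 1, -1, 1, 0],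
  !![1, -1, 0, 2; 0, -1, 0, 4; 0, -1, 1, 2; 0, 0, 0, 1],
  !![0, 1, 0, -2; -1, 2, 0, -2; -1, 1, 1, -2; -1, 1, 0, -1],
  !![-1, 0, 2, -2; -2, 1, 2, -2; -1, 0, 2, -1; -1, 0, 1, 0],
  !![1, 0, 0, 0; 2, 1, -2, 0; 2, 0, -1, 0; 1, 0, -1, 1],
  !![1, -1, 2, -2; 0, -1, 4, -4; 0, -1, 3, -2; 0, -1, 2, -1],
  !![-1, 2, -2, 0; -2, 3, -2, 0; -2, 2, -1, 0; -1, 1, -1, 1],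
  !![1, 1, -2, 0; 0, 3, -4, 0; 0, 2, -3, 0; 0, 1, -2, 1],
  !![1, -2, 2, 0; 0, -3, 4, 0; 0, -2, 3, 0; 0, -1, 1, 1],
  !![2, -1, 0, 0; 3, -2, 0, 0; 2, -2, 1, 0; 1, -1, 0, 1],
  !![1, 0, -2, 2; 0, 1, -4, 4; 0, 0, -2, 3; 0, 0, -1, 2],
  !![-1, 0, 0, 0; -3, 1, 0, 0; -2, 0, 1, 0; -1, 0, 0, 1],
  !![1, 0, 0, -2; 0, 1, 0, -4; 0, 0, 1, -3; 0, 0, 0, -1],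
  !![1, 0, 0, 0; 0, 1, 0, 0; 0, 0, 1, 0; 0, 0, 0, 1]]
def par : Fin 25 → Fin 4 := ![0, 0, 0, 0, 1, 2, 1, 3, 2, 3, 0, 3, 1, 3, 3, 2, 3, 2, 2, 1, 1, 2, 0, 3, 0]
def par4 : Fin 25 → Fin 4 := ![0, 1, 2, 3, 0, 0, 0, 0, 0, 0, 0, 0, 0, 0, 0, 0, 0, 0, 0, 0, 0, 0, 0, 0, 0]
def prv : Fin 25 → Fin 25 := ![0, 0, 0, 0, 0, 1, 2, 2, 4, 5, 6, 6, 8, 8, 10, 11, 12, 14, 16, 17, 18, 19, 20, 21, 0]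

lemma g0_eq : g0 = S6 0 * S6 1 * S6 2 * S6 3 * S6 4 * S6 5 := by
  have h1 : S6 0 * S6 1 * S6 2 = !![0, 0, -1, 1, 0, 1; 1, 0, -1, 1, 0, 1; 0, 1, -1, 1, 0, 1; 0, 0, 0, 1, 0, 0; 0, 0, 0, 0, 1, 0; 0, 0, 0, 0, 0, 1] := by decide +kernel
  rw [h1]
  decide +kernel
lemma g2_eq : g0 * g0 = g2 := by decide +kernel
lemma C6_eq : g0 ^ 6 = C6 := by
  have h : g0 ^ 6 = (g0 * g0) * (g0 * g0) * (g0 * g0) := by noncomm_ring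
  rw [h, g2_eq]
  decide +kernel
lemma C6_P : C6 * P64 = -P64 := by decide +kernel
lemma Q_P : Q46 * P64 = 1 := by decide +kernel
lemma P_R : P64 * R46 = 1 - C6 := by decide +kernel
lemma PKP : P64ᵀ * K6 * P64 = K4 := by decide +kernel
lemma K6i_K6 : K6i * K6 = 3 := by decide +kernel
lemma S6_K (i : Fin 6) : (S6 i)ᵀ * K6 * S6 i = K6 := by revert i; decide +kernel
lemma R4_K (i : Fin 25) : (R4 i)ᵀ * K4 * R4 i = K4 := by revert i; decide +kernel
lemma R4_sq (i : Fin 25) : R4 i * R4 i = 1 := by revert i; decide +kernel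
lemma R4_spec (i : Fin 25) : (i < 4 ∧ R4 i = T4 (par4 i)) ∨ i = 24 ∨
    (prv i < i ∧ R4 i = T4 (par i) * R4 (prv i) * T4 (par i)) := by
  revert i; decide +kernel

lemma S6_formula (i p q : Fin 6) :
    S6 i p q = (if p = q then 1 else 0) - (if p = i then K6 i q else 0) := by
  have h : ∀ i, S6 i = of fun p q => (if p = q then 1 else 0) - (if p = i then K6 i q else 0) := by
    decide +kernel
  rw [h]; rfl

lemma W0_P : S6 5 * P64 = P64 * T4 0 := by decide +kernel
lemma W1_P : (S6 0 * S6 1 * S6 2 * S6 1 * S6 0) * P64 = P64 * T4 1 := by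
  have h1 : S6 0 * S6 1 * S6 2 = !![0, 0, -1, 1, 0, 1; 1, 0, -1, 1, 0, 1; 0, 1, -1, 1, 0, 1; 0, 0, 0, 1, 0, 0; 0, 0, 0, 0, 1, 0; 0, 0, 0, 0, 0, 1] := by decide +kernel
  rw [h1]
  decide +kernel
lemma W2_P : (S6 0 * S6 3) * P64 = P64 * T4 2 := by decide +kernel
lemma W3_P : (S6 1 * S6 4) * P64 = P64 * T4 3 := by decide +kernel

/-- The base of long roots. -/
def f4 : Fin 4 → Fin 4 → ℤ := ![![1, 0, 0, 0], ![0, 1, 0, 0], ![1, 2, 2, 1], ![-1, -2, -1, -1]]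
def F4 : Matrix (Fin 4) (Fin 4) ℤ := !![1, 0, 1, -1; 0, 1, 2, -2; 0, 0, 2, -1; 0, 0, 1, -1]
def F4i : Matrix (Fin 4) (Fin 4) ℤ := !![1, 0, 0, -1; 0, 1, 0, -2; 0, 0, 1, -1; 0, 0, 1, -2]
lemma F4_inv : F4 * F4i = 1 := by decide +kernel
lemma F4_col (i j : Fin 4) : F4 i j = f4 j i := by
  have h : F4 = of fun i j => f4 j i := by decide +kernel
  rw [h]; rfl

def bil (u v : Fin 4 → ℤ) : ℤ := u ⬝ᵥ (K4 *ᵥ v)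

lemma bil_formula (u v : Fin 4 → ℤ) : bil u v =
    u 0 * (2 * v 0 - v 1) + u 1 * (-v 0 + 2 * v 1 - 2 * v 2)
     + u 2 * (-2 * v 1 + 4 * v 2 - 2 * v 3) + u 3 * (-2 * v 2 + 4 * v 3) := by
  simp [bil, dotProduct, mulVec, K4, Fin.sum_univ_four]
  ring

def box : List (Fin 4 → ℤ) :=
  (do
    let a ← [-2, -1, 0, 1, 2]
    let b ← [-4, -3, -2, -1, 0, 1, 2, 3, 4]
    let c ← [-4, -3, -2, -1, 0, 1, 2, 3, 4]
    let d ← [-1, 0, 1]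
    [![a, b, c, d]] : List (Fin 4 → ℤ))

lemma mem_box (u : Fin 4 → ℤ) (h : bil u u = 2) : u ∈ box := by
  have h2 : (u 0 - u 3) ^ 2 + (u 1 - u 0 - u 3) ^ 2 + (2 * u 2 - u 1 - u 3) ^ 2 + (u 3) ^ 2 = 2 := by
    rw [bil_formula] at h; linarith
  have key : ∀ x : ℤ, x ^ 2 ≤ 2 → -1 ≤ x ∧ x ≤ 1 := fun x hx => ⟨by nlinarith, by nlinarith⟩
  have k0 := key (u 0 - u 3) (by nlinarith [sq_nonneg (u 1 - u 0 - u 3), sq_nonneg (2 * u 2 - u 1 - u 3), sq_nonneg (u 3)])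
  have k1 := key (u 1 - u 0 - u 3) (by nlinarith [sq_nonneg (u 0 - u 3), sq_nonneg (2 * u 2 - u 1 - u 3), sq_nonneg (u 3)])
  have k2 := key (2 * u 2 - u 1 - u 3) (by nlinarith [sq_nonneg (u 0 - u 3), sq_nonneg (u 1 - u 0 - u 3), sq_nonneg (u 3)])
  have k3 := key (u 3) (by nlinarith [sq_nonneg (u 0 - u 3), sq_nonneg (u 1 - u 0 - u 3), sq_nonneg (2 * u 2 - u 1 - u 3)])
  have hu : u = ![u 0, u 1, u 2, u 3] := by ext i; fin_cases i <;> rfl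
  have m0 : u 0 ∈ ([-2, -1, 0, 1, 2] : List ℤ) := by simp; omega
  have m1 : u 1 ∈ ([-4, -3, -2, -1, 0, 1, 2, 3, 4] : List ℤ) := by simp; omega
  have m2 : u 2 ∈ ([-4, -3, -2, -1, 0, 1, 2, 3, 4] : List ℤ) := by simp; omega
  have m3 : u 3 ∈ ([-1, 0, 1] : List ℤ) := by simp; omega
  rw [hu]
  simp only [box, List.bind_eq_flatMap, List.mem_flatMap]
  exact ⟨_, m0, _, m1, _, m2, _, m3, by simp⟩

lemma step_all : ∀ u ∈ box, bil u u = 2 → ∀ k : Fin 4,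
    (∀ j < k, bil (f4 j) u = bil (f4 j) (f4 k)) →
    ∃ i, (∀ j < k, R4 i *ᵥ f4 j = f4 j) ∧ ∃ i', (∀ j < k, R4 i' *ᵥ f4 j = f4 j) ∧
      R4 i' *ᵥ (R4 i *ᵥ u) = f4 k := by
  decide +kernel

lemma bil_f4 (k : Fin 4) : bil (f4 k) (f4 k) = 2 := by revert k; decide +kernel

lemma bil_pres {N : Matrix (Fin 4) (Fin 4) ℤ} (hN : Nᵀ * K4 * N = K4) (u v : Fin 4 → ℤ) :
    bil (N *ᵥ u) (N *ᵥ v) = bil u v := by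
  unfold bil
  conv_rhs => rw [← hN]
  rw [dotProduct_comm, dotProduct_mulVec, dotProduct_comm, ← mulVec_transpose]
  simp only [mulVec_mulVec, Matrix.mul_assoc]

abbrev W4 : Submonoid (Matrix (Fin 4) (Fin 4) ℤ) := Submonoid.closure (Set.range T4)
abbrev W6 : Submonoid (Matrix (Fin 6) (Fin 6) ℤ) := Submonoid.closure (Set.range S6)

lemma T4_mem (i : Fin 4) : T4 i ∈ W4 := Submonoid.subset_closure ⟨i, rfl⟩
lemma S6_mem (i : Fin 6) : S6 i ∈ W6 := Submonoid.subset_closure ⟨i, rfl⟩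

lemma R4_last : R4 24 = 1 := by decide +kernel

lemma R4_mem (i : Fin 25) : R4 i ∈ W4 := by
  induction i using WellFoundedLT.induction with
  | ind i ih =>
    rcases R4_spec i with ⟨_, h⟩ | h | ⟨h, h'⟩
    · rw [h]; exact T4_mem _
    · rw [h, R4_last]; exact one_mem _
    · rw [h']; exact mul_mem (mul_mem (T4_mem _) (ih _ h)) (T4_mem _)

/-- Every automorphism of the `D₄` lattice is in the Weyl group of `F₄`: descent. -/
lemma descent (k : ℕ) (hk : k ≤ 4) : ∀ N : Matrix (Fin 4) (Fin 4) ℤ, Nᵀ * K4 * N = K4 →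
    (∀ j : Fin 4, (j : ℕ) < 4 - k → N *ᵥ f4 j = f4 j) → N ∈ W4 := by
  induction k with
  | zero =>
    intro N _ h
    have h1 : N * F4 = F4 := by
      ext i j
      have := congrFun (h j (by omega)) i
      rw [← F4_col] at this
      rw [← this]
      simp [mul_apply, mulVec, dotProduct, F4_col]
    have h2 : N = 1 := by
      calc N = N * (F4 * F4i) := by rw [F4_inv, mul_one]
        _ = 1 := by rw [← mul_assoc, h1, F4_inv]
    rw [h2]; exact one_mem _
  | succ k ih =>
    intro N hN h
    let m : Fin 4 := ⟨4 - (k + 1), by omega⟩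
    have hb : bil (N *ᵥ f4 m) (N *ᵥ f4 m) = 2 := by rw [bil_pres hN, bil_f4]
    obtain ⟨i, hij, i', hij', hi⟩ := step_all _ (mem_box _ hb) hb m (by
      intro j hj
      rw [← bil_pres hN (f4 j) (f4 m), h j hj])
    have hmem : R4 i' * (R4 i * N) ∈ W4 := by
      apply ih (by omega)
      · rw [transpose_mul, transpose_mul]
        calc Nᵀ * (R4 i)ᵀ * (R4 i')ᵀ * K4 * (R4 i' * (R4 i * N))
            = Nᵀ * ((R4 i)ᵀ * ((R4 i')ᵀ * K4 * R4 i') * R4 i) * N := by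
              simp only [mul_assoc]
          _ = K4 := by rw [R4_K, R4_K, hN]
      · intro j hj
        rw [← mulVec_mulVec, ← mulVec_mulVec]
        by_cases hjm : (j : ℕ) < 4 - (k + 1)
        · rw [h j hjm, hij j hjm]; exact hij' j hjm
        · have : j = m := Fin.ext (by simp only [m]; omega)
          rw [this, hi]
    have : N = R4 i * (R4 i' * (R4 i' * (R4 i * N))) := by
      rw [← mul_assoc (R4 i'), R4_sq, one_mul, ← mul_assoc, R4_sq, one_mul]
    rw [this]
    exact mul_mem (R4_mem i) (mul_mem (R4_mem i') hmem)

lemma W6_pres {N : Matrix (Fin 6) (Fin 6) ℤ} (hN : N ∈ W6) : Nᵀ * K6 * N = K6 := by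
  induction hN using Submonoid.closure_induction with
  | mem x hx => obtain ⟨i, rfl⟩ := hx; exact S6_K i
  | one => simp
  | mul x y _ _ hx hy =>
    rw [transpose_mul]
    calc yᵀ * xᵀ * K6 * (x * y) = yᵀ * (xᵀ * K6 * x) * y := by simp only [mul_assoc]
      _ = K6 := by rw [hx, hy]

/-- The key integral statement, one direction. -/
lemma key_one {N : Matrix (Fin 6) (Fin 6) ℤ} (hN : N ∈ W6) {N' : Matrix (Fin 4) (Fin 4) ℤ}
    (h : N * P64 = P64 * N') : N' ∈ W4 := by
  apply descent 4 le_rfl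
  · rw [← PKP]
    calc N'ᵀ * (P64ᵀ * K6 * P64) * N' = (P64 * N')ᵀ * K6 * (P64 * N') := by
          rw [transpose_mul]; simp only [Matrix.mul_assoc]
      _ = P64ᵀ * (Nᵀ * K6 * N) * P64 := by
          rw [← h, transpose_mul]; simp only [Matrix.mul_assoc]
      _ = _ := by rw [W6_pres hN]
  · intro j hj; omega

/-- The key integral statement, other direction. -/
lemma key_two {N' : Matrix (Fin 4) (Fin 4) ℤ} (hN : N' ∈ W4) :
    ∃ N ∈ W6, N * P64 = P64 * N' := by
  induction hN using Submonoid.closure_induction with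
  | mem x hx =>
    obtain ⟨i, rfl⟩ := hx
    fin_cases i
    · exact ⟨_, S6_mem 5, W0_P⟩
    · exact ⟨_, mul_mem (mul_mem (mul_mem (mul_mem (S6_mem 0) (S6_mem 1)) (S6_mem 2)) (S6_mem 1))
        (S6_mem 0), W1_P⟩
    · exact ⟨_, mul_mem (S6_mem 0) (S6_mem 3), W2_P⟩
    · exact ⟨_, mul_mem (S6_mem 1) (S6_mem 4), W3_P⟩
  | one => exact ⟨1, one_mem _, by simp⟩
  | mul x y _ _ hx hy =>
    obtain ⟨X, hX, hx⟩ := hx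
    obtain ⟨Y, hY, hy⟩ := hy
    refine ⟨X * Y, mul_mem hX hY, ?_⟩
    rw [Matrix.mul_assoc, hy, ← Matrix.mul_assoc, hx, Matrix.mul_assoc]

/-- Transfer between a complex reflection group and its integral form. -/
lemma transfer {n : ℕ} {ι : Type} (A Ai : Matrix (Fin n) (Fin n) ℂ) (h1 : A * Ai = 1)
    (r : ι → Matrix (Fin n) (Fin n) ℂ) (S : ι → Matrix (Fin n) (Fin n) ℤ)
    (h : ∀ i, r i * A = A * (S i).map cst) (M : Matrix (Fin n) (Fin n) ℂ) :
    M ∈ Submonoid.closure {M | ∃ i, M = r i} ↔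
      ∃ N ∈ Submonoid.closure (Set.range S), M * A = A * N.map cst := by
  constructor
  · intro hM
    induction hM using Submonoid.closure_induction with
    | mem x hx =>
      obtain ⟨i, rfl⟩ := hx
      exact ⟨S i, Submonoid.subset_closure ⟨i, rfl⟩, h i⟩
    | one => exact ⟨1, one_mem _, by simp⟩
    | mul x y _ _ hx hy =>
      obtain ⟨X, hX, hx⟩ := hx
      obtain ⟨Y, hY, hy⟩ := hy
      refine ⟨X * Y, mul_mem hX hY, ?_⟩
      rw [Matrix.map_mul, mul_assoc, hy, ← mul_assoc, hx, mul_assoc]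
  · rintro ⟨N, hN, hM⟩
    induction hN using Submonoid.closure_induction generalizing M with
    | mem x hx =>
      obtain ⟨i, rfl⟩ := hx
      have : M = r i := by
        calc M = M * (A * Ai) := by rw [h1, mul_one]
          _ = r i * (A * Ai) := by rw [← mul_assoc, hM, ← h i, mul_assoc]
          _ = r i := by rw [h1, mul_one]
      rw [this]; exact Submonoid.subset_closure ⟨i, rfl⟩
    | one =>
      have : M = 1 := by
        calc M = M * (A * Ai) := by rw [h1, mul_one]
          _ = 1 := by rw [← mul_assoc, hM]; simp [h1]
      rw [this]; exact one_mem _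
    | mul x y _ _ hx hy =>
      have h2 : Ai * A = 1 := mul_eq_one_comm.mp h1
      have : M = (A * x.map cst * Ai) * (A * y.map cst * Ai) := by
        calc M = M * (A * Ai) := by rw [h1, mul_one]
          _ = A * x.map cst * (1 * y.map cst) * Ai := by
              rw [← mul_assoc, hM, Matrix.map_mul]; simp only [mul_assoc, one_mul]
          _ = _ := by rw [← h2]; simp only [mul_assoc]
      rw [this]
      exact mul_mem (hx _ (by rw [mul_assoc, h2, mul_one])) (hy _ (by rw [mul_assoc, h2, mul_one]))

lemma reflMat_mulVec {N : ℕ} (v w : Fin N → ℂ) :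
    reflMat v (-1) *ᵥ w = w - (2 * herm w v / herm v v) • v := by
  ext i
  simp only [reflMat, mulVec, dotProduct, of_apply, sub_mul, Finset.sum_sub_distrib, ite_mul,
    one_mul, zero_mul, Finset.sum_ite_eq, Finset.mem_univ, if_true, Pi.sub_apply, Pi.smul_apply,
    smul_eq_mul]
  congr 1
  simp only [herm, Finset.mul_sum, Finset.sum_div, Finset.sum_mul]
  rw [← Finset.sum_congr rfl]
  intro j _
  ring

lemma sq2 : (Real.sqrt 2 : ℂ) * (Real.sqrt 2 : ℂ) = 2 := by
  rw [← Complex.ofReal_mul, Real.mul_self_sqrt (by norm_num)]; norm_num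
lemma sq32 : (Real.sqrt (3 / 2) : ℂ) * (Real.sqrt (3 / 2) : ℂ) = 3 / 2 := by
  rw [← Complex.ofReal_mul, Real.mul_self_sqrt (by norm_num)]; norm_num
lemma sq2_ne : (Real.sqrt 2 : ℂ) ≠ 0 := by
  intro h; have := sq2; rw [h] at this; norm_num at this
lemma sq2_inv : (Real.sqrt 2 : ℂ)⁻¹ = (Real.sqrt 2 : ℂ) / 2 := by
  have := sq2_ne
  field_simp
  rw [pow_two, sq2]

/-- The Gram matrix of the simple roots of `E₆`, with real entries. -/
lemma gram (a : Fin 6 → (Fin 6 → ℂ))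
    (ha0 : a 0 = ![0, 1, -1, 0, 1 / (Real.sqrt 2 : ℂ), (Real.sqrt (3 / 2) : ℂ)])
    (ha1 : a 1 = ![0, 0, 1, -1, -(Real.sqrt 2 : ℂ), 0])
    (ha2 : a 2 = ![0, 0, 0, 2, 0, 0])
    (ha3 : a 3 = ![0, 0, 1, -1, (Real.sqrt 2 : ℂ), 0])
    (ha4 : a 4 = ![0, 1, -1, 0, -(1 / (Real.sqrt 2 : ℂ)), -(Real.sqrt (3 / 2) : ℂ)])
    (ha5 : a 5 = ![1, -1, -1, -1, 0, 0]) :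
    (∀ i j, (starRingEnd ℂ) (a i j) = a i j) ∧
      ∀ i j, herm (a j) (a i) = 2 * (K6 i j : ℂ) := by
  have h2 : (starRingEnd ℂ) 2 = 2 := Complex.conj_ofNat 2
  have hr : ∀ i j, (starRingEnd ℂ) (a i j) = a i j := by
    intro i j
    fin_cases i <;> fin_cases j <;>
      simp [ha0, ha1, ha2, ha3, ha4, ha5, Complex.conj_ofReal, h2]
  refine ⟨hr, ?_⟩
  intro i j
  simp only [herm, hr]
  have e1 := sq2
  have e2 := sq32
  generalize hs : (Real.sqrt 2 : ℂ) = s at *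
  generalize ht : (Real.sqrt (3 / 2) : ℂ) = t at *
  have e3 : s⁻¹ = s / 2 := by rw [← hs]; exact sq2_inv
  fin_cases i <;> fin_cases j <;>
    simp [ha0, ha1, ha2, ha3, ha4, ha5, K6, Fin.sum_univ_six, e3] <;>
    first
      | ring1
      | linear_combination (1 / 4) * e1 + e2
      | linear_combination (-1 / 4) * e1 - e2
      | linear_combination (1 / 2) * e1
      | linear_combination (-1 / 2) * e1
      | linear_combination e1
      | linear_combination -e1

/-- The scaled `F₄` basis. -/
def B4 : Matrix (Fin 4) (Fin 4) ℂ := !![1, 0, 0, -1; -1, 1, 0, -1; 0, -1, 2, -1; 0, 0, 0, -1]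
def B4i : Matrix (Fin 4) (Fin 4) ℂ :=
  !![1, 0, 0, -1; 1, 1, 0, -2; 1 / 2, 1 / 2, 1 / 2, -(3 / 2); 0, 0, 0, -1]

lemma B4_inv : B4 * B4i = 1 := by
  ext i j
  fin_cases i <;> fin_cases j <;> simp [B4, B4i, mul_apply, Fin.sum_univ_four] <;> norm_num

lemma refl4 (β : Fin 4 → (Fin 4 → ℂ))
    (hβ0 : β 0 = ![1, -1, 0, 0])
    (hβ1 : β 1 = ![0, 1, -1, 0])
    (hβ2 : β 2 = ![0, 0, (Real.sqrt 2 : ℂ), 0])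
    (hβ3 : β 3 = ![-(1 / (Real.sqrt 2 : ℂ)), -(1 / (Real.sqrt 2 : ℂ)),
      -(1 / (Real.sqrt 2 : ℂ)), -(1 / (Real.sqrt 2 : ℂ))]) (i : Fin 4) :
    reflMat (β i) (-1) * B4 = B4 * (T4 i).map cst := by
  have h2 : (starRingEnd ℂ) 2 = 2 := Complex.conj_ofNat 2
  have hr : ∀ i j, (starRingEnd ℂ) (β i j) = β i j := by
    intro i j
    fin_cases i <;> fin_cases j <;>
      simp [hβ0, hβ1, hβ2, hβ3, Complex.conj_ofReal, h2]
  have e1 := sq2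
  have hn : ∀ i, herm (β i) (β i) = 2 := by
    intro i
    simp only [herm, hr]
    generalize hs : (Real.sqrt 2 : ℂ) = s at *
    have e3 : s⁻¹ = s / 2 := by rw [← hs]; exact sq2_inv
    fin_cases i <;> simp [hβ0, hβ1, hβ2, hβ3, Fin.sum_univ_four, e3] <;>
      first
        | ring1
        | linear_combination e1
  have hR : reflMat (β i) (-1) = of fun p q => (if p = q then 1 else 0) - β i p * β i q := by
    ext p q
    simp only [reflMat, of_apply, hr, hn]
    ring
  rw [hR]
  generalize hs : (Real.sqrt 2 : ℂ) = s at *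
  have e3 : s⁻¹ = s / 2 := by rw [← hs]; exact sq2_inv
  have e4 : s / 2 * (s / 2) = 1 / 2 := by linear_combination e1 / 4
  ext p q
  fin_cases i <;> fin_cases p <;> fin_cases q <;>
    simp [mul_apply, Fin.sum_univ_four, hβ0, hβ1, hβ2, hβ3, B4, T4, e1, e3, e4] <;> norm_num

lemma refl6 (a : Fin 6 → (Fin 6 → ℂ)) (hgr : ∀ i j, herm (a j) (a i) = 2 * (K6 i j : ℂ))
    (i : Fin 6) :
    reflMat (a i) (-1) * (of fun p q => a q p) = (of fun p q => a q p) * (S6 i).map cst := by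
  have hK : K6 i i = 2 := by revert i; decide +kernel
  ext p q
  have h := congrFun (reflMat_mulVec (a i) (a q)) p
  rw [hgr, hgr, hK] at h
  have h' : (reflMat (a i) (-1) * (of fun p q => a q p) : Matrix _ _ ℂ) p q
      = (reflMat (a i) (-1) *ᵥ a q) p := by
    simp [mul_apply, mulVec, dotProduct]
  rw [h', h]
  simp only [mul_apply, of_apply, map_apply, S6_formula, map_sub, mul_sub, Finset.sum_sub_distrib,
    apply_ite cst, mul_ite, map_zero, map_one, mul_zero, mul_one, Finset.sum_ite_eq',
    Finset.mem_univ, if_true, Pi.sub_apply, Pi.smul_apply, smul_eq_mul]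
  simp
  ring

lemma A6_inv (a : Fin 6 → (Fin 6 → ℂ)) (hr : ∀ i j, (starRingEnd ℂ) (a i j) = a i j)
    (hgr : ∀ i j, herm (a j) (a i) = 2 * (K6 i j : ℂ)) :
    ∃ Ai : Matrix (Fin 6) (Fin 6) ℂ, (of fun p q => a q p : Matrix (Fin 6) (Fin 6) ℂ) * Ai = 1 := by
  set A : Matrix (Fin 6) (Fin 6) ℂ := of fun p q => a q p with hA
  have h1 : Aᵀ * A = (2 : ℂ) • K6.map cst := by
    ext i j
    simp only [mul_apply, transpose_apply, hA, of_apply, Matrix.smul_apply, map_apply, smul_eq_mul]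
    have := hgr i j
    simp only [herm, hr] at this
    rw [show cst (K6 i j) = (K6 i j : ℂ) from rfl, ← this]
    exact Finset.sum_congr rfl fun x _ => mul_comm _ _
  have h2 : K6i.map cst * K6.map cst = (3 : ℂ) • 1 := by
    rw [← Matrix.map_mul, K6i_K6]
    ext i j
    fin_cases i <;> fin_cases j <;> simp [Matrix.ofNat_apply]
  refine ⟨(1 / 6 : ℂ) • (K6i.map cst * Aᵀ), mul_eq_one_comm.mp ?_⟩
  rw [smul_mul_assoc, mul_assoc, h1, mul_smul_comm, h2, smul_smul, smul_smul]
  norm_num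

lemma zeta6 (ζ : ℂ) (hζ : ζ = Complex.exp (Real.pi * Complex.I / 6)) : ζ ^ 6 = -1 := by
  rw [hζ, ← Complex.exp_nat_mul, ← Complex.exp_pi_mul_I]
  congr 1
  push_cast
  ring

/-- The `2`-reflection subquotient of `G₃₅ = E₆` is isomorphic to
`G₂₈ = F₄`: with `ζ = e^{πi/6}`, the Coxeter element `g` of `E₆` (product of the six
simple reflections), and `E` the `ζ^6 = -1`-eigenspace of `g^6` (a `4`-dimensional
subspace), there is a `ℂ`-linear isomorphism `ψ : E ≅ ℂ^4` conjugating the reflection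
subquotient `π_E(N_E)` onto `G₂₈ = F₄`. -/
theorem statement_12 (ζ : ℂ) (hζ : ζ = Complex.exp (Real.pi * Complex.I / 6))
    (a : Fin 6 → (Fin 6 → ℂ))
    (ha0 : a 0 = ![0, 1, -1, 0, 1 / (Real.sqrt 2 : ℂ), (Real.sqrt (3 / 2) : ℂ)])
    (ha1 : a 1 = ![0, 0, 1, -1, -(Real.sqrt 2 : ℂ), 0])
    (ha2 : a 2 = ![0, 0, 0, 2, 0, 0])
    (ha3 : a 3 = ![0, 0, 1, -1, (Real.sqrt 2 : ℂ), 0])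
    (ha4 : a 4 = ![0, 1, -1, 0, -(1 / (Real.sqrt 2 : ℂ)), -(Real.sqrt (3 / 2) : ℂ)])
    (ha5 : a 5 = ![1, -1, -1, -1, 0, 0])
    (G35 : Submonoid (Matrix (Fin 6) (Fin 6) ℂ))
    (hG35 : G35 = Submonoid.closure {M | ∃ i : Fin 6, M = reflMat (a i) (-1)})
    (g : Matrix (Fin 6) (Fin 6) ℂ)
    (hg : g = reflMat (a 0) (-1) * reflMat (a 1) (-1) * reflMat (a 2) (-1) *
      reflMat (a 3) (-1) * reflMat (a 4) (-1) * reflMat (a 5) (-1))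
    (E : Submodule ℂ (Fin 6 → ℂ)) (hE : E = eigSpace (g ^ 6) (ζ ^ 6))
    (β : Fin 4 → (Fin 4 → ℂ))
    (hβ0 : β 0 = ![1, -1, 0, 0])
    (hβ1 : β 1 = ![0, 1, -1, 0])
    (hβ2 : β 2 = ![0, 0, (Real.sqrt 2 : ℂ), 0])
    (hβ3 : β 3 = ![-(1 / (Real.sqrt 2 : ℂ)), -(1 / (Real.sqrt 2 : ℂ)),
      -(1 / (Real.sqrt 2 : ℂ)), -(1 / (Real.sqrt 2 : ℂ))])
    (G28 : Submonoid (Matrix (Fin 4) (Fin 4) ℂ))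
    (hG28 : G28 = Submonoid.closure {M | ∃ i : Fin 4, M = reflMat (β i) (-1)}) :
    Module.finrank ℂ E = 4 ∧
    ∃ Φ : (Fin 4 → ℂ) →ₗ[ℂ] (Fin 6 → ℂ), Function.Injective Φ ∧
      LinearMap.range Φ = E ∧
      (G28 : Set (Matrix (Fin 4) (Fin 4) ℂ)) =
        {M' | ∃ M ∈ G35, (∀ v ∈ E, M.mulVec v ∈ E) ∧
          ∀ t : Fin 4 → ℂ, M.mulVec (Φ t) = Φ (M'.mulVec t)} := by
  obtain ⟨hr, hgr⟩ := gram a ha0 ha1 ha2 ha3 ha4 ha5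
  obtain ⟨Ai, hAi⟩ := A6_inv a hr hgr
  have hrefl := refl6 a hgr
  have hrefl4 := refl4 β hβ0 hβ1 hβ2 hβ3
  set A : Matrix (Fin 6) (Fin 6) ℂ := of fun p q => a q p with hA
  have hiA : Ai * A = 1 := mul_eq_one_comm.mp hAi
  have hBi := B4_inv
  have hiB : B4i * B4 = 1 := mul_eq_one_comm.mp hBi
  have t6 := transfer A Ai hAi (fun i => reflMat (a i) (-1)) S6 hrefl
  have t4 := transfer B4 B4i hBi (fun i => reflMat (β i) (-1)) T4 hrefl4
  have hQP : Q46.map cst * P64.map cst = 1 := by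
    rw [← Matrix.map_mul, Q_P]; simp
  -- the matrix of `Φ` and a left inverse
  set F : Matrix (Fin 6) (Fin 4) ℂ := A * P64.map cst * B4i with hF
  set F' : Matrix (Fin 4) (Fin 6) ℂ := B4 * Q46.map cst * Ai with hF'
  have hFF : F' * F = 1 := by
    calc F' * F = B4 * (Q46.map cst * ((Ai * A) * P64.map cst)) * B4i := by
          simp only [hF, hF', Matrix.mul_assoc]
      _ = 1 := by rw [hiA, Matrix.one_mul, hQP, Matrix.mul_one, hBi]
  have hcancel : ∀ t, F' *ᵥ (F *ᵥ t) = t := fun t => by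
    rw [mulVec_mulVec, hFF, one_mulVec]
  have hinj : Function.Injective F.mulVecLin := by
    intro x y hxy
    rw [← hcancel x, ← hcancel y]
    exact congrArg (F' *ᵥ ·) hxy
  -- `g ^ 6`
  have hstep : ∀ (X Y : Matrix (Fin 6) (Fin 6) ℂ) (U V : Matrix (Fin 6) (Fin 6) ℤ),
      X * A = A * U.map cst → Y * A = A * V.map cst → (X * Y) * A = A * (U * V).map cst := by
    intro X Y U V hX hY
    rw [Matrix.map_mul, mul_assoc, hY, ← mul_assoc, hX, mul_assoc]
  have hgA : g * A = A * g0.map cst := by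
    rw [hg, g0_eq]
    exact hstep _ _ _ _ (hstep _ _ _ _ (hstep _ _ _ _ (hstep _ _ _ _ (hstep _ _ _ _ (hrefl 0)
      (hrefl 1)) (hrefl 2)) (hrefl 3)) (hrefl 4)) (hrefl 5)
  have hg6 : g ^ 6 * A = A * C6.map cst := by
    have : ∀ n : ℕ, g ^ n * A = A * (g0 ^ n).map cst := by
      intro n
      induction n with
      | zero => simp
      | succ n ih => rw [pow_succ, pow_succ]; exact hstep _ _ _ _ ih hgA
    rw [this 6, C6_eq]
  have hmemE : ∀ v, v ∈ E ↔ (g ^ 6) *ᵥ v = -v := by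
    intro v
    rw [hE, zeta6 ζ hζ, eigSpace, Module.End.mem_eigenspace_iff]
    simp
  have hrange : LinearMap.range F.mulVecLin = E := by
    ext v
    rw [hmemE, LinearMap.mem_range]
    constructor
    · rintro ⟨t, rfl⟩
      have : g ^ 6 * F = -F := by
        calc g ^ 6 * F = (g ^ 6 * A) * P64.map cst * B4i := by simp only [hF, Matrix.mul_assoc]
          _ = A * (C6 * P64).map cst * B4i := by
            rw [hg6, Matrix.map_mul]; simp only [Matrix.mul_assoc]
          _ = -F := by
            rw [C6_P]
            have : (-P64).map cst = -(P64.map cst) := by ext; simp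
            rw [this, Matrix.mul_neg, Matrix.neg_mul]
      rw [mulVecLin_apply, mulVec_mulVec, this, neg_mulVec]
    · intro hv
      refine ⟨(1 / 2 : ℂ) • ((B4 * R46.map cst * Ai) *ᵥ v), ?_⟩
      have : F * (B4 * R46.map cst * Ai) = 1 - g ^ 6 := by
        calc F * (B4 * R46.map cst * Ai)
            = A * (P64.map cst * ((B4i * B4) * R46.map cst)) * Ai := by
              simp only [hF, Matrix.mul_assoc]
          _ = A * (1 - C6).map cst * Ai := by
              rw [hiB, Matrix.one_mul, ← Matrix.map_mul, P_R]
          _ = A * Ai - (A * C6.map cst) * Ai := by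
              have : (1 - C6).map cst = 1 - C6.map cst := by
                rw [Matrix.map_sub _ (by simp)]; simp
              rw [this, mul_sub, sub_mul, mul_one]
          _ = 1 - g ^ 6 := by rw [← hg6, mul_assoc, hAi, mul_one]
      rw [mulVecLin_apply, mulVec_smul, mulVec_mulVec, this, sub_mulVec, hv, one_mulVec]
      ext i
      simp
      ring
  refine ⟨?_, F.mulVecLin, hinj, hrange, ?_⟩
  · rw [← hrange, LinearMap.finrank_range_of_inj hinj]; simp
  ext M'
  simp only [SetLike.mem_coe, Set.mem_setOf_eq]
  rw [hG28]
  constructor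
  · intro hM'
    obtain ⟨N', hN', hMN'⟩ := (t4 M').mp hM'
    obtain ⟨N, hN, hNN⟩ := key_two hN'
    have hMA : (A * N.map cst * Ai) * A = A * N.map cst := by rw [mul_assoc, hiA, mul_one]
    have hMF : (A * N.map cst * Ai) * F = F * M' := by
      calc (A * N.map cst * Ai) * F = ((A * N.map cst * Ai) * A) * P64.map cst * B4i := by
            simp only [hF, Matrix.mul_assoc]
        _ = A * (N * P64).map cst * B4i := by
            rw [hMA, Matrix.map_mul]; simp only [Matrix.mul_assoc]
        _ = A * P64.map cst * ((B4i * B4) * N'.map cst) * B4i := by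
            rw [hNN, Matrix.map_mul, hiB, Matrix.one_mul]; simp only [Matrix.mul_assoc]
        _ = F * (B4 * N'.map cst) * B4i := by simp only [hF, Matrix.mul_assoc]
        _ = F * M' := by rw [← hMN', Matrix.mul_assoc F, Matrix.mul_assoc M', hBi, Matrix.mul_one]
    have hcomm : ∀ t : Fin 4 → ℂ, (A * N.map cst * Ai).mulVec (F.mulVecLin t)
        = F.mulVecLin (M'.mulVec t) := by
      intro t
      simp only [mulVecLin_apply, mulVec_mulVec, hMF]
    refine ⟨A * N.map cst * Ai, ?_, ?_, hcomm⟩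
    · rw [hG35]; exact (t6 _).mpr ⟨N, hN, hMA⟩
    · intro v hv
      rw [← hrange] at hv ⊢
      obtain ⟨t, rfl⟩ := hv
      exact ⟨_, (hcomm t).symm⟩
  · rintro ⟨M, hM, -, hcomm⟩
    rw [hG35] at hM
    obtain ⟨N, hN, hMN⟩ := (t6 M).mp hM
    have hMF : M * F = F * M' := by
      apply Matrix.toLin'.injective
      ext1 t
      ext1
      simpa [mulVec_mulVec] using hcomm (Pi.single t 1)
    have h1 : N.map cst * P64.map cst = P64.map cst * (B4i * M' * B4) := by
      calc N.map cst * P64.map cst = Ai * (A * N.map cst) * P64.map cst := by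
            rw [← mul_assoc, hiA, one_mul]
        _ = Ai * (M * F) * B4 := by
            have h0 : F * B4 = A * P64.map cst := by
              rw [hF, Matrix.mul_assoc, hiB, Matrix.mul_one]
            rw [← hMN, Matrix.mul_assoc, Matrix.mul_assoc, ← h0]
            simp only [Matrix.mul_assoc]
        _ = (Ai * A) * P64.map cst * (B4i * M' * B4) := by
            rw [hMF, hF]; simp only [Matrix.mul_assoc]
        _ = _ := by rw [hiA, Matrix.one_mul]
    have h2 : B4i * M' * B4 = (Q46 * N * P64).map cst := by
      calc B4i * M' * B4 = (Q46.map cst * P64.map cst) * (B4i * M' * B4) := by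
            rw [hQP, Matrix.one_mul]
        _ = _ := by rw [Matrix.mul_assoc, ← h1, Matrix.map_mul, Matrix.map_mul, Matrix.mul_assoc]
    have h3 : N * P64 = P64 * (Q46 * N * P64) := by
      apply Matrix.map_injective (f := cst) (RingHom.injective_int cst)
      rw [h2] at h1
      simpa only [Matrix.map_mul] using h1
    refine (t4 M').mpr ⟨_, key_one hN h3, ?_⟩
    rw [← h2, ← mul_assoc, ← mul_assoc, hBi, one_mul]

end
end Paper
end

section
/- Let ζ = e^{πi/6}, ω = e^{2πi/3}, let G_28 = F_4 ⊂ GL_4(C) be generated by the four order-2 reflections s(β_1), ..., s(β_4) with roots β_1 = e_1 − e_2, β_2 = e_2 − e_3, β_3 = √2 e_3, β_4 = −(1/√2)(e_1 + e_2 + e_3 + e_4), and let g = s(β_1)s(β_2)s(β_3)s(β_4) be the Coxeter element. Let E be the ζ^2-eigenspace of g^2, a 2-dimensional subspace, N_E = {s ∈ G_28 : s(E) ⊆ E}, and π_E restriction to E. Then there exists a C-linear isomorphism ψ : E → C^2 such that ψ ∘ π_E(N_E) ∘ ψ^{−1} = G_5, where G_5 ⊂ GL_2(C) is generated by r_1 =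 (ω/2)·[[−1−i, 1−i], [−1−i, −1+i]] and r_2' = (ω/2)·[[−1+i, 1−i], [−1−i, −1−i]]. In other words, the 6-reflection subquotient of G_28 = F_4 is isomorphic to G_5. -/
open Matrix MvPolynomial

namespace Paper

noncomputable section

/-- A vector of `ℂ^4` written in a basis `b, g²b, b', g²b'` of the Hurwitz lattice. -/
def cvec (a b c d : ℂ) : Fin 4 → ℂ :=
  ![a + b / 2 - d / 2, b / 2 + c + d / 2, b / 2 - d / 2, -b / 2 - d / 2]

lemma cvec_inj {a b c d a' b' c' d' : ℂ} (h : cvec a b c d = cvec a' b' c' d') :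
    a = a' ∧ b = b' ∧ c = c' ∧ d = d' := by
  have h0 := congrFun h 0
  have h1 := congrFun h 1
  have h2 := congrFun h 2
  have h3 := congrFun h 3
  simp [cvec] at h0 h1 h2 h3
  refine ⟨?_, ?_, ?_, ?_⟩
  · linear_combination h0 - h2
  · linear_combination h2 - h3
  · linear_combination h1 + h3
  · linear_combination -h2 - h3

lemma cvec_surj (v : Fin 4 → ℂ) : ∃ a b c d, v = cvec a b c d := by
  refine ⟨v 0 - v 2, v 2 - v 3, v 1 + v 3, -v 2 - v 3, ?_⟩
  ext i
  fin_cases i <;> simp [cvec] <;> ring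

lemma cvec_add (a b c d a' b' c' d' : ℂ) :
    cvec a b c d + cvec a' b' c' d' = cvec (a + a') (b + b') (c + c') (d + d') := by
  ext i
  fin_cases i <;> simp [cvec] <;> ring

lemma cvec_smul (k a b c d : ℂ) :
    k • cvec a b c d = cvec (k * a) (k * b) (k * c) (k * d) := by
  ext i
  fin_cases i <;> simp [cvec] <;> ring

lemma sqrt_two_sq : ((Real.sqrt 2 : ℝ) : ℂ) * ((Real.sqrt 2 : ℝ) : ℂ) = 2 := by
  rw [← Complex.ofReal_mul, Real.mul_self_sqrt (by norm_num)]
  norm_num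

lemma refl0 (a b c d : ℂ) :
    (reflMat ![1, -1, 0, 0] (-1)).mulVec (cvec a b c d) = cvec (c + d) b (a - d) d := by
  ext i
  fin_cases i <;>
    simp [reflMat, herm, cvec, Matrix.mulVec, dotProduct, Fin.sum_univ_four] <;> ring

lemma refl1 (a b c d : ℂ) :
    (reflMat ![0, 1, -1, 0] (-1)).mulVec (cvec a b c d) =
      cvec (a - c - d) (b + c + d) (-d) (-c) := by
  ext i
  fin_cases i <;>
    simp [reflMat, herm, cvec, Matrix.mulVec, dotProduct, Fin.sum_univ_four] <;> ring

lemma refl2 (a b c d : ℂ) :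
    (reflMat ![0, 0, (Real.sqrt 2 : ℂ), 0] (-1)).mulVec (cvec a b c d) =
      cvec (a + b - d) d c b := by
  have h := sqrt_two_sq
  ext i
  fin_cases i <;>
    simp [reflMat, herm, cvec, Matrix.mulVec, dotProduct, Fin.sum_univ_four, mul_assoc, h] <;>
    ring

lemma refl3 (a b c d : ℂ) :
    (reflMat ![-(1 / (Real.sqrt 2 : ℂ)), -(1 / (Real.sqrt 2 : ℂ)),
      -(1 / (Real.sqrt 2 : ℂ)), -(1 / (Real.sqrt 2 : ℂ))] (-1)).mulVec (cvec a b c d) =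
      cvec a b (-a - b + d) (a + b + c) := by
  have h : ((Real.sqrt 2 : ℝ) : ℂ)⁻¹ * ((Real.sqrt 2 : ℝ) : ℂ)⁻¹ = 2⁻¹ := by
    rw [← mul_inv, sqrt_two_sq]
  ext i
  fin_cases i <;>
    simp [reflMat, herm, cvec, Matrix.mulVec, dotProduct, Fin.sum_univ_four, mul_assoc, h] <;>
    ring

/-- Integral coordinate vectors. -/
abbrev Quad := ℤ × ℤ × ℤ × ℤ

/-- The lattice vector with given integral coordinates. -/
def bvec (u : Quad) : Fin 4 → ℂ := cvec u.1 u.2.1 u.2.2.1 u.2.2.2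

lemma bvec_inj {u v : Quad} (h : bvec u = bvec v) : u = v := by
  obtain ⟨h1, h2, h3, h4⟩ := cvec_inj h
  exact Prod.ext (by exact_mod_cast h1) (Prod.ext (by exact_mod_cast h2)
    (Prod.ext (by exact_mod_cast h3) (by exact_mod_cast h4)))

/-- The 24 Hurwitz units in lattice coordinates. -/
def hunits : List Quad :=
  [(1, 0, 0, 0), (-1, 0, 0, 0), (0, 0, 1, 0), (0, 0, -1, 0), (-1, 1, 0, -1), (1, -1, 0, 1),
   (0, -1, 1, -1), (0, 1, -1, 1), (0, 0, 1, -1), (0, 1, 0, 0), (1, -1, 1, 0), (1, 0, 0, 1),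
   (0, 0, 0, -1), (0, 1, -1, 0), (1, -1, 0, 0), (1, 0, -1, 1), (-1, 0, 1, -1), (-1, 1, 0, 0),
   (0, -1, 1, 0), (0, 0, 0, 1), (-1, 0, 0, -1), (-1, 1, -1, 0), (0, -1, 0, 0), (0, 0, -1, 1)]

/-- The four simple reflections in lattice coordinates. -/
def sact : Fin 4 → Quad → Quad
  | 0, (a, b, c, d) => (c + d, b, a - d, d)
  | 1, (a, b, c, d) => (a - c - d, b + c + d, -d, -c)
  | 2, (a, b, c, d) => (a + b - d, d, c, b)
  | 3, (a, b, c, d) => (a, b, -a - b + d, a + b + c)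

lemma sact_mem : ∀ i : Fin 4, ∀ u ∈ hunits, sact i u ∈ hunits := by
  decide +kernel

/-- The two order-3 generators of the centralizer, in lattice coordinates. -/
def ract : Bool → Quad → Quad
  | false, (a, b, c, d) => (a, b, -a - b + d, a - c - d)
  | true, (a, b, c, d) => (a + b + c, -a + d, -b, a + b)

/-- Action of a word in the two generators. -/
def wact (w : List Bool) (u : Quad) : Quad := w.foldr ract u

/-- The linear combination `x₁ u + x₂ g²u + x₃ v + x₄ g²v`. -/
def comb : Quad → Quad → Quad → Quad
  | (a, b, c, d), (a', b', c', d'), (x, y, z, t) =>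
    (x * a - y * b + z * a' - t * b',
     x * b + y * (a + b) + z * b' + t * (a' + b'),
     x * c - y * d + z * c' - t * d',
     x * d + y * (c + d) + z * d' + t * (c' + d'))

/-- Words for the 72 elements of the centralizer of `g²`. -/
def cwords : List (List Bool) :=
  [[],
   [false],
   [true],
   [false, false],
   [true, false],
   [false, true],
   [true, true],
   [true, false, false],
   [false, true, false],
   [true, true, false],
   [false, false, true],
   [true, false, true],
   [false, true, true],
   [false, true, false, false],
   [true, true, false, false],
   [false, false, true, false],
   [true, false, true, false],
   [false, true, true, false],
   [true, false, false, true],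
   [true, true, false, true],
   [false, false, true, true],
   [true, false, true, true],
   [false, false, true, false, false],
   [true, false, true, false, false],
   [false, true, true, false, false],
   [true, false, false, true, false],
   [true, true, false, true, false],
   [false, false, true, true, false],
   [true, false, true, true, false],
   [false, true, false, false, true],
   [true, true, false, false, true],
   [false, true, true, false, true],
   [true, false, false, true, true],
   [true, true, false, true, true],
   [true, false, false, true, false, false],
   [true, true, false, true, false, false],
   [false, false, true, true, false, false],
   [true, false, true, true, false, false],
   [false, true, false, false, true, false],
   [true, true, false, false, true, false],
   [false, true, true, false, true, false],
   [true, false, false, true, true, false],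
   [true, true, false, true, true, false],
   [false, false, true, false, false, true],
   [false, true, true, false, false, true],
   [true, false, true, true, false, true],
   [true, true, false, false, true, true],
   [false, true, true, false, true, true],
   [false, true, false, false, true, false, false],
   [true, true, false, false, true, false, false],
   [false, true, true, false, true, false, false],
   [true, false, false, true, true, false, false],
   [true, true, false, true, true, false, false],
   [false, false, true, false, false, true, false],
   [false, true, true, false, false, true, false],
   [true, false, true, true, false, true, false],
   [true, true, false, false, true, true, false],
   [false, true, true, false, true, true, false],
   [true, false, false, true, false, false, true],
   [true, false, true, true, false, false, true],
   [false, false, true, false, false, true, false, false],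
   [false, true, true, false, false, true, false, false],
   [true, false, true, true, false, true, false, false],
   [true, true, false, false, true, true, false, false],
   [false, true, true, false, true, true, false, false],
   [true, false, false, true, false, false, true, false],
   [true, false, true, true, false, false, true, false],
   [true, true, false, true, true, false, false, true],
   [true, false, false, true, false, false, true, false, false],
   [true, false, true, true, false, false, true, false, false],
   [true, true, false, true, true, false, false, true, false],
   [true, true, false, true, true, false, false, true, false, false]]

lemma key : ∀ u ∈ hunits, ∀ v ∈ hunits, (∀ x ∈ hunits, comb u v x ∈ hunits) →
    ∃ w ∈ cwords, wact w (1, 0, 0, 0) = u ∧ wact w (0, 0, 1, 0) = v ∧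
      wact w (0, 1, 0, 0) = comb u v (0, 1, 0, 0) ∧
      wact w (0, 0, 0, 1) = comb u v (0, 0, 0, 1) := by
  decide +kernel

/-- The parametrization of the eigenspace `E`. -/
def phi (z : ℂ) : (Fin 2 → ℂ) →ₗ[ℂ] (Fin 4 → ℂ) where
  toFun t := cvec (t 0 + (z * (1 - Complex.I) - 1) * t 1)
    (-z * (t 0 + (z * (1 - Complex.I) - 1) * t 1))
    (Complex.I * ((z * (1 - Complex.I) - 1) * t 0 + t 1))
    (-z * (Complex.I * ((z * (1 - Complex.I) - 1) * t 0 + t 1)))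
  map_add' s t := by
    rw [cvec_add]
    congr 1 <;> simp only [Pi.add_apply] <;> ring
  map_smul' k t := by
    rw [RingHom.id_apply, cvec_smul]
    congr 1 <;> simp only [Pi.smul_apply, smul_eq_mul] <;> ring

lemma phi_apply (z : ℂ) (t : Fin 2 → ℂ) :
    phi z t = cvec (t 0 + (z * (1 - Complex.I) - 1) * t 1)
    (-z * (t 0 + (z * (1 - Complex.I) - 1) * t 1))
    (Complex.I * ((z * (1 - Complex.I) - 1) * t 0 + t 1))
    (-z * (Complex.I * ((z * (1 - Complex.I) - 1) * t 0 + t 1))) := rfl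

lemma phi_solve (z : ℂ) (hz : z ^ 2 = z - 1) (a c : ℂ) :
    phi z ![(z + Complex.I) * (1 - z) / 2 *
        (a + Complex.I * (z * (1 - Complex.I) - 1) * c),
      (z + Complex.I) * (1 - z) / 2 *
        (-(z * (1 - Complex.I) - 1) * a - Complex.I * c)] = cvec a (-z * a) c (-z * c) := by
  have hI : Complex.I ^ 2 = -1 := Complex.I_sq
  rw [phi_apply]
  simp only [Matrix.cons_val_zero, Matrix.cons_val_one]
  generalize Complex.I = I at *
  congr 1 <;> grind

lemma phi_inj (z : ℂ) (hz : z ^ 2 = z - 1) : Function.Injective (phi z) := by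
  rw [← LinearMap.ker_eq_bot, LinearMap.ker_eq_bot']
  intro t ht
  have h0 : (0 : Fin 4 → ℂ) = cvec 0 0 0 0 := by
    ext i
    fin_cases i <;> simp [cvec]
  rw [phi_apply, h0] at ht
  obtain ⟨h1, -, h3, -⟩ := cvec_inj ht
  have hI : Complex.I ^ 2 = -1 := Complex.I_sq
  have e : t 0 = 0 ∧ t 1 = 0 := by
    generalize Complex.I = I at *
    generalize t 0 = x at *
    generalize t 1 = y at *
    clear ht h0
    constructor
    · have : (z + I) * (1 - z) / 2 * ((x + (z * (1 - I) - 1) * y)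
        + I * (z * (1 - I) - 1) * (I * ((z * (1 - I) - 1) * x + y))) = x := by grind
      rw [← this, h1, h3]; ring
    · have : (z + I) * (1 - z) / 2 * (-(z * (1 - I) - 1) * (x + (z * (1 - I) - 1) * y)
        - I * (I * ((z * (1 - I) - 1) * x + y))) = y := by grind
      rw [← this, h1, h3]; ring
  ext i
  fin_cases i
  · exact e.1
  · exact e.2

lemma cvec_decomp (a b c d : ℂ) :
    cvec a b c d = a • bvec (1, 0, 0, 0) + b • bvec (0, 1, 0, 0) + c • bvec (0, 0, 1, 0) +
      d • bvec (0, 0, 0, 1) := by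
  simp only [bvec, cvec_smul, cvec_add]
  congr 1 <;> simp

lemma mulVec_cvec (M : Matrix (Fin 4) (Fin 4) ℂ) (a b c d : ℂ) :
    M.mulVec (cvec a b c d) = a • M.mulVec (bvec (1, 0, 0, 0)) +
      b • M.mulVec (bvec (0, 1, 0, 0)) + c • M.mulVec (bvec (0, 0, 1, 0)) +
      d • M.mulVec (bvec (0, 0, 0, 1)) := by
  rw [cvec_decomp]
  simp only [Matrix.mulVec_add, Matrix.mulVec_smul]

/-- If `p = z q` with `p, q` integers and `z` non-real then `p = 0`. -/
lemma int_zero {z : ℂ} (hz : z.im ≠ 0) {p q : ℤ} (h : (p : ℂ) = z * q) : p = 0 := by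
  have h2 := congrArg Complex.im h
  have h3 : (q : ℝ) = 0 := by
    simpa [hz] using h2.symm
  have h4 : q = 0 := by exact_mod_cast h3
  subst h4
  simpa using h

/-- Elements whose image stays in the eigenspace intertwine `g²`. -/
lemma eig_comm {z : ℂ} (hz : z ^ 2 = z - 1) (him : z.im ≠ 0) {g2 : Matrix (Fin 4) (Fin 4) ℂ}
    (hg2 : ∀ a b c d, g2.mulVec (cvec a b c d) = cvec (-b) (a + b) (-d) (c + d))
    (u u2 : Quad) (h : g2.mulVec (bvec u + (-z) • bvec u2) = z • (bvec u + (-z) • bvec u2)) :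
    u2 = (-u.2.1, u.1 + u.2.1, -u.2.2.2, u.2.2.1 + u.2.2.2) := by
  obtain ⟨a, b, c, d⟩ := u
  obtain ⟨a', b', c', d'⟩ := u2
  simp only [bvec, cvec_smul, cvec_add, hg2] at h
  obtain ⟨h1, h2, h3, h4⟩ := cvec_inj h
  have k1 := int_zero him (p := -b - a') (q := -b' + a - a')
    (by push_cast; linear_combination h1 - a' * hz)
  have k2 := int_zero him (p := a + b - b') (q := a' + b' + b - b')
    (by push_cast; linear_combination h2 - b' * hz)
  have k3 := int_zero him (p := -d - c') (q := -d' + c - c')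
    (by push_cast; linear_combination h3 - c' * hz)
  have k4 := int_zero him (p := c + d - d') (q := c' + d' + d - d')
    (by push_cast; linear_combination h4 - d' * hz)
  ext <;> simp <;> omega

/-- The `6`-reflection subquotient of `G₂₈ = F₄` is isomorphic to `G₅`:
with `ζ = e^{πi/6}`, `ω = e^{2πi/3}`, the Coxeter element `g` of `F₄`, and `E` the
`ζ^2`-eigenspace of `g^2` (a `2`-dimensional subspace), there is a `ℂ`-linear
isomorphism `ψ : E ≅ ℂ^2` conjugating `π_E(N_E)` onto `G₅`. -/
theorem statement_14 (ζ ω : ℂ) (hζ : ζ = Complex.exp (Real.pi * Complex.I / 6))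
    (hω : ω = Complex.exp (2 * Real.pi * Complex.I / 3))
    (β : Fin 4 → (Fin 4 → ℂ))
    (hβ0 : β 0 = ![1, -1, 0, 0])
    (hβ1 : β 1 = ![0, 1, -1, 0])
    (hβ2 : β 2 = ![0, 0, (Real.sqrt 2 : ℂ), 0])
    (hβ3 : β 3 = ![-(1 / (Real.sqrt 2 : ℂ)), -(1 / (Real.sqrt 2 : ℂ)),
      -(1 / (Real.sqrt 2 : ℂ)), -(1 / (Real.sqrt 2 : ℂ))])
    (G28 : Submonoid (Matrix (Fin 4) (Fin 4) ℂ))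
    (hG28 : G28 = Submonoid.closure {M | ∃ i : Fin 4, M = reflMat (β i) (-1)})
    (g : Matrix (Fin 4) (Fin 4) ℂ)
    (hg : g = reflMat (β 0) (-1) * reflMat (β 1) (-1) * reflMat (β 2) (-1) *
      reflMat (β 3) (-1))
    (E : Submodule ℂ (Fin 4 → ℂ)) (hE : E = eigSpace (g ^ 2) (ζ ^ 2))
    (r₁ r₂' : Matrix (Fin 2) (Fin 2) ℂ)
    (hr₁ : r₁ = (ω / 2) • !![-1 - Complex.I, 1 - Complex.I;
      -1 - Complex.I, -1 + Complex.I])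
    (hr₂' : r₂' = (ω / 2) • !![-1 + Complex.I, 1 - Complex.I;
      -1 - Complex.I, -1 - Complex.I])
    (G5 : Submonoid (Matrix (Fin 2) (Fin 2) ℂ))
    (hG5 : G5 = Submonoid.closure {r₁, r₂'}) :
    Module.finrank ℂ E = 2 ∧
    ∃ Φ : (Fin 2 → ℂ) →ₗ[ℂ] (Fin 4 → ℂ), Function.Injective Φ ∧
      LinearMap.range Φ = E ∧
      (G5 : Set (Matrix (Fin 2) (Fin 2) ℂ)) =
        {M' | ∃ M ∈ G28, (∀ v ∈ E, M.mulVec v ∈ E) ∧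
          ∀ t : Fin 2 → ℂ, M.mulVec (Φ t) = Φ (M'.mulVec t)} := by
  obtain ⟨z, hzdef⟩ : ∃ z, z = ζ ^ 2 := ⟨_, rfl⟩
  have hzexp : z = Complex.exp ((Real.pi / 3 : ℝ) * Complex.I) := by
    rw [hzdef, hζ, ← Complex.exp_nat_mul]
    congr 1
    push_cast
    ring
  have hzval : z = 1 / 2 + (Real.sqrt 3 / 2 : ℝ) * Complex.I := by
    rw [hzexp, Complex.exp_mul_I, ← Complex.ofReal_cos, ← Complex.ofReal_sin,
      Real.cos_pi_div_three, Real.sin_pi_div_three]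
    push_cast
    ring
  have him : z.im ≠ 0 := by
    rw [hzval]
    simp
  have hsq3 : ((Real.sqrt 3 : ℝ) : ℂ) ^ 2 = 3 := by
    rw [← Complex.ofReal_pow, Real.sq_sqrt (by norm_num)]
    norm_num
  have hz : z ^ 2 = z - 1 := by
    rw [hzval]
    push_cast
    have hI := Complex.I_sq
    generalize Complex.I = I at *
    linear_combination (1 / 4 : ℂ) * I ^ 2 * hsq3 + (3 / 4 : ℂ) * hI
  have hωz : ω = z - 1 := by
    rw [← hz, hω, hzexp, ← Complex.exp_nat_mul]
    congr 1
    push_cast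
    ring
  have hs0 : ∀ a b c d, (reflMat (β 0) (-1)).mulVec (cvec a b c d) =
      cvec (c + d) b (a - d) d := by
    rw [hβ0]; exact refl0
  have hs1 : ∀ a b c d, (reflMat (β 1) (-1)).mulVec (cvec a b c d) =
      cvec (a - c - d) (b + c + d) (-d) (-c) := by
    rw [hβ1]; exact refl1
  have hs2 : ∀ a b c d, (reflMat (β 2) (-1)).mulVec (cvec a b c d) =
      cvec (a + b - d) d c b := by
    rw [hβ2]; exact refl2
  have hs3 : ∀ a b c d, (reflMat (β 3) (-1)).mulVec (cvec a b c d) =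
      cvec a b (-a - b + d) (a + b + c) := by
    rw [hβ3]; exact refl3
  have hsG : ∀ i, reflMat (β i) (-1) ∈ G28 := fun i => by
    rw [hG28]; exact Submonoid.subset_closure ⟨i, rfl⟩
  -- the square of the Coxeter element
  have hg2 : ∀ a b c d, (g ^ 2).mulVec (cvec a b c d) = cvec (-b) (a + b) (-d) (c + d) := by
    intro a b c d
    rw [pow_two, hg]
    simp only [← Matrix.mulVec_mulVec, hs0, hs1, hs2, hs3]
    congr 1 <;> ring
  have hEmem : ∀ v, v ∈ E ↔ (g ^ 2).mulVec v = z • v := by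
    intro v
    rw [hE, hzdef, eigSpace, Module.End.mem_eigenspace_iff, Matrix.mulVecLin_apply]
  have hrange : LinearMap.range (phi z) = E := by
    ext v
    rw [hEmem]
    constructor
    · rintro ⟨t, rfl⟩
      rw [phi_apply, hg2, cvec_smul]
      congr 1
      · ring
      · linear_combination (t 0 + (z * (1 - Complex.I) - 1) * t 1) * hz
      · ring
      · linear_combination (Complex.I * ((z * (1 - Complex.I) - 1) * t 0 + t 1)) * hz
    · intro h
      obtain ⟨a, b, c, d, rfl⟩ := cvec_surj v
      rw [hg2, cvec_smul] at h
      obtain ⟨h1, -, h3, -⟩ := cvec_inj h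
      have hb : b = -z * a := by linear_combination -h1
      have hd : d = -z * c := by linear_combination -h3
      rw [hb, hd]
      exact ⟨_, phi_solve z hz a c⟩
  have hinj := phi_inj z hz
  refine ⟨?_, phi z, hinj, hrange, ?_⟩
  · rw [← hrange, LinearMap.finrank_range_of_inj hinj]
    simp
  -- the two generators
  obtain ⟨R, hRf, hRt⟩ : ∃ R : Bool → Matrix (Fin 4) (Fin 4) ℂ,
      R false = reflMat (β 3) (-1) * reflMat (β 1) (-1) * reflMat (β 2) (-1) *
        reflMat (β 1) (-1) ∧
      R true = reflMat (β 2) (-1) * reflMat (β 1) (-1) * reflMat (β 2) (-1) *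
        reflMat (β 0) (-1) :=
    ⟨fun b => cond b _ _, rfl, rfl⟩
  obtain ⟨r, hrf, hrt⟩ : ∃ r : Bool → Matrix (Fin 2) (Fin 2) ℂ, r false = r₁ ∧ r true = r₂' :=
    ⟨fun b => cond b _ _, rfl, rfl⟩
  have hRG : ∀ b, R b ∈ G28 := by
    intro b
    cases b
    · rw [hRf]
      exact mul_mem (mul_mem (mul_mem (hsG 3) (hsG 1)) (hsG 2)) (hsG 1)
    · rw [hRt]
      exact mul_mem (mul_mem (mul_mem (hsG 2) (hsG 1)) (hsG 2)) (hsG 0)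
  have hRc0 : ∀ a b c d, (R false).mulVec (cvec a b c d) =
      cvec a b (-a - b + d) (a - c - d) := by
    intro a b c d
    rw [hRf]
    simp only [← Matrix.mulVec_mulVec, hs0, hs1, hs2, hs3]
    congr 1 <;> ring
  have hRc1 : ∀ a b c d, (R true).mulVec (cvec a b c d) =
      cvec (a + b + c) (-a + d) (-b) (a + b) := by
    intro a b c d
    rw [hRt]
    simp only [← Matrix.mulVec_mulVec, hs0, hs1, hs2, hs3]
    congr 1 <;> ring
  have hRb : ∀ b u, (R b).mulVec (bvec u) = bvec (ract b u) := by
    rintro b ⟨x, y, p, q⟩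
    cases b
    · simp [bvec, hRc0, ract]
    · simp [bvec, hRc1, ract]
  have hRphi : ∀ b t, (R b).mulVec (phi z t) = phi z ((r b).mulVec t) := by
    intro b t
    have hI : Complex.I ^ 2 = -1 := Complex.I_sq
    cases b
    · rw [phi_apply, phi_apply, hRc0, hrf, hr₁, hωz]
      simp only [Matrix.mulVec, dotProduct, Fin.sum_univ_two, Matrix.smul_apply, Matrix.of_apply,
        Matrix.cons_val_zero, Matrix.cons_val_one, smul_eq_mul]
      generalize Complex.I = I at *
      generalize t 0 = x at *
      generalize t 1 = y at *
      clear * - hI hz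
      congr 1 <;> grind
    · rw [phi_apply, phi_apply, hRc1, hrt, hr₂', hωz]
      simp only [Matrix.mulVec, dotProduct, Fin.sum_univ_two, Matrix.smul_apply, Matrix.of_apply,
        Matrix.cons_val_zero, Matrix.cons_val_one, smul_eq_mul]
      generalize Complex.I = I at *
      generalize t 0 = x at *
      generalize t 1 = y at *
      clear * - hI hz
      congr 1 <;> grind
  have hrG : ∀ b, r b ∈ G5 := by
    intro b
    rw [hG5]
    cases b
    · rw [hrf]; exact Submonoid.subset_closure (by simp)
    · rw [hrt]; exact Submonoid.subset_closure (by simp)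
  have hword : ∀ w : List Bool, ∃ M : Matrix (Fin 4) (Fin 4) ℂ, ∃ M' ∈ G5,
      (∀ u, M.mulVec (bvec u) = bvec (wact w u)) ∧
      ∀ t, M.mulVec (phi z t) = phi z (M'.mulVec t) := by
    intro w
    induction w with
    | nil => exact ⟨1, 1, one_mem _, by simp [wact], by simp⟩
    | cons b w ih =>
      obtain ⟨M, M', hM', h1, h2⟩ := ih
      refine ⟨R b * M, r b * M', mul_mem (hrG b) hM', ?_, ?_⟩
      · intro u
        rw [← Matrix.mulVec_mulVec, h1, hRb]
        rfl
      · intro t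
        rw [← Matrix.mulVec_mulVec, h2, hRphi, Matrix.mulVec_mulVec]
  -- elements of `G28` permute the units
  have hperm : ∀ M ∈ G28, ∀ u ∈ hunits, ∃ u' ∈ hunits, M.mulVec (bvec u) = bvec u' := by
    intro M hM
    rw [hG28] at hM
    induction hM using Submonoid.closure_induction with
    | mem M h =>
      obtain ⟨i, rfl⟩ := h
      intro u hu
      refine ⟨sact i u, sact_mem i u hu, ?_⟩
      obtain ⟨x, y, p, q⟩ := u
      fin_cases i
      · simp [bvec, hs0, sact]
      · simp [bvec, hs1, sact]
      · simp [bvec, hs2, sact]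
      · simp [bvec, hs3, sact]
    | one => exact fun u hu => ⟨u, hu, by simp⟩
    | mul A B _ _ hA hB =>
      intro u hu
      obtain ⟨u', hu', h1⟩ := hB u hu
      obtain ⟨u'', hu'', h2⟩ := hA u' hu'
      exact ⟨u'', hu'', by rw [← Matrix.mulVec_mulVec, h1, h2]⟩
  ext M'
  simp only [SetLike.mem_coe, Set.mem_setOf_eq]
  constructor
  · intro hM'
    have hex : ∃ M ∈ G28, ∀ t, M.mulVec (phi z t) = phi z (M'.mulVec t) := by
      rw [hG5] at hM'
      induction hM' using Submonoid.closure_induction with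
      | mem A h =>
        rcases h with rfl | h
        · exact ⟨R false, hRG _, by rw [← hrf]; exact hRphi false⟩
        · rw [Set.mem_singleton_iff] at h
          subst h
          exact ⟨R true, hRG _, by rw [← hrt]; exact hRphi true⟩
      | one => exact ⟨1, one_mem _, by simp⟩
      | mul A B _ _ hA hB =>
        obtain ⟨M, hM, h1⟩ := hA
        obtain ⟨N, hN, h2⟩ := hB
        refine ⟨M * N, mul_mem hM hN, fun t => ?_⟩
        rw [← Matrix.mulVec_mulVec, h2, h1, Matrix.mulVec_mulVec]
    obtain ⟨M, hM, h⟩ := hex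
    refine ⟨M, hM, ?_, h⟩
    intro v hv
    rw [← hrange] at hv ⊢
    obtain ⟨t, rfl⟩ := hv
    exact ⟨M'.mulVec t, (h t).symm⟩
  · rintro ⟨M, hM, hME, hMphi⟩
    have hp := hperm M hM
    obtain ⟨u, hu, hMu⟩ := hp (1, 0, 0, 0) (by decide)
    obtain ⟨u2, -, hMu2⟩ := hp (0, 1, 0, 0) (by decide)
    obtain ⟨v, hv, hMv⟩ := hp (0, 0, 1, 0) (by decide)
    obtain ⟨v2, -, hMv2⟩ := hp (0, 0, 0, 1) (by decide)
    have hd1 : cvec 1 (-z) 0 0 ∈ E := by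
      rw [← hrange]
      exact ⟨_, (phi_solve z hz 1 0).trans (by simp)⟩
    have hd2 : cvec 0 0 1 (-z) ∈ E := by
      rw [← hrange]
      exact ⟨_, (phi_solve z hz 0 1).trans (by simp)⟩
    have q1 := (hEmem _).1 (hME _ hd1)
    have q2 := (hEmem _).1 (hME _ hd2)
    rw [mulVec_cvec M, hMu, hMu2, hMv, hMv2, one_smul, zero_smul, zero_smul, add_zero,
      add_zero] at q1
    rw [mulVec_cvec M, hMu, hMu2, hMv, hMv2, one_smul, zero_smul, zero_smul, add_zero,
      zero_add] at q2
    have c1 := eig_comm hz him hg2 u u2 q1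
    have c2 := eig_comm hz him hg2 v v2 q2
    have hcomb : ∀ x : Quad, M.mulVec (bvec x) = bvec (comb u v x) := by
      rintro ⟨x, y, p, q⟩
      rw [bvec, mulVec_cvec M, hMu, hMu2, hMv, hMv2, c1, c2]
      simp only [bvec, cvec_smul, cvec_add, comb]
      congr 1 <;> push_cast <;> ring
    have hpres : ∀ x ∈ hunits, comb u v x ∈ hunits := by
      intro x hx
      obtain ⟨x', hx', h⟩ := hp x hx
      rw [hcomb] at h
      rw [bvec_inj h]
      exact hx'
    obtain ⟨w, -, w1, w2, w3, w4⟩ := key u hu v hv hpres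
    obtain ⟨W, W', hW', hWb, hWphi⟩ := hword w
    have heq : ∀ t, M.mulVec (phi z t) = W.mulVec (phi z t) := by
      intro t
      rw [phi_apply, mulVec_cvec M, mulVec_cvec W, hWb, hWb, hWb, hWb, w1, w2, w3, w4,
        hMu, hMv, hcomb, hcomb]
    have hfin : M' = W' := by
      apply Matrix.mulVec_injective
      funext t
      apply hinj
      rw [← hMphi, ← hWphi, heq]
    rw [hfin]
    exact hW'

end
end Paper
end
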